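/- arXiv:1506.01814 — 3 statements merged into one kernel-verified Lean document; each statement's English description precedes it below -/
import Mathlib

section
/- Let ℓ be an odd prime, K a number field containing a primitive ℓ-th root of unity ζ, S a finite set of finite places of K such that ℓ is invertible in O = O_{K,S}. Then the number of conjugacy classes in SL₂(O) of elements g of order exactly ℓ with tr(g) = ζ + ζ⁻¹ equals the class number card(Cl(O)) of the ring O. -/
open IsDedekindDomain NumberField
open scoped nonZeroDivisors

namespace SLConj

set_option linter.unusedSectionVars false

variable {R K : Type*} [CommRing R] [IsDomain R] [Field K] [Algebra R K] [IsFractionRing R K]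

/-- `g = zi + (z - zi) u wᵀ` over `K`, with `w ⬝ u = 1`. -/
structure Dat (z zi : R) (g : Matrix.SpecialLinearGroup (Fin 2) R) (u1 u2 w1 w2 : K) : Prop where
  one : u1 * w1 + u2 * w2 = 1
  h00 : algebraMap R K (g.1 0 0) = algebraMap R K zi + algebraMap R K (z - zi) * (u1 * w1)
  h01 : algebraMap R K (g.1 0 1) = algebraMap R K (z - zi) * (u1 * w2)
  h10 : algebraMap R K (g.1 1 0) = algebraMap R K (z - zi) * (u2 * w1)
  h11 : algebraMap R K (g.1 1 1) = algebraMap R K zi + algebraMap R K (z - zi) * (u2 * w2)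

variable (R) in
/-- The fractional ideal generated by two elements. -/
noncomputable def J (a b : K) : FractionalIdeal R⁰ K :=
  FractionalIdeal.spanSingleton R⁰ a + FractionalIdeal.spanSingleton R⁰ b

lemma J_le {a b : K} {I : FractionalIdeal R⁰ K} : J R a b ≤ I ↔ a ∈ I ∧ b ∈ I := by
  simp only [J, ← FractionalIdeal.sup_eq_add, sup_le_iff,
    FractionalIdeal.spanSingleton_le_iff_mem]

lemma mem_J_left (a b : K) : a ∈ J R a b := (J_le.1 le_rfl).1
lemma mem_J_right (a b : K) : b ∈ J R a b := (J_le.1 le_rfl).2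

lemma add_mem_fr {I : FractionalIdeal R⁰ K} {x y : K} (hx : x ∈ I) (hy : y ∈ I) : x + y ∈ I :=
  (I : Submodule R K).add_mem hx hy

lemma sub_mem_fr {I : FractionalIdeal R⁰ K} {x y : K} (hx : x ∈ I) (hy : y ∈ I) : x - y ∈ I :=
  (I : Submodule R K).sub_mem hx hy

lemma amul_mem_fr {I : FractionalIdeal R⁰ K} (r : R) {x : K} (hx : x ∈ I) :
    algebraMap R K r * x ∈ I := by
  rw [← Algebra.smul_def]
  exact (I : Submodule R K).smul_mem r hx

lemma J_scale (x a b : K) : J R (x * a) (x * b) = FractionalIdeal.spanSingleton R⁰ x * J R a b := by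
  simp [J, mul_add, FractionalIdeal.spanSingleton_mul_spanSingleton]

variable {z zi : R}

lemma exists_dat (hz : z * zi = 1) (hd : IsUnit (z - zi)) (g : Matrix.SpecialLinearGroup (Fin 2) R) (ht : g.1.trace = z + zi) :
    ∃ u1 u2 w1 w2 : K, Dat z zi g u1 u2 w1 w2 := by
  obtain ⟨d, hd'⟩ := hd.exists_right_inv
  have hdet := g.2
  rw [Matrix.det_fin_two] at hdet
  rw [Matrix.trace_fin_two] at ht
  obtain ⟨a, ha⟩ : ∃ a, a = d * (g.1 0 0 - zi) := ⟨_, rfl⟩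
  obtain ⟨b, hb⟩ : ∃ b, b = d * g.1 0 1 := ⟨_, rfl⟩
  obtain ⟨c, hc⟩ : ∃ c, c = d * g.1 1 0 := ⟨_, rfl⟩
  obtain ⟨e, he⟩ : ∃ e, e = d * (g.1 1 1 - zi) := ⟨_, rfl⟩
  have ha' : g.1 0 0 = zi + (z - zi) * a := by rw [ha]; linear_combination (zi - g.1 0 0) * hd'
  have hb' : g.1 0 1 = (z - zi) * b := by rw [hb]; linear_combination (- g.1 0 1) * hd'
  have hc' : g.1 1 0 = (z - zi) * c := by rw [hc]; linear_combination (- g.1 1 0) * hd'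
  have he' : g.1 1 1 = zi + (z - zi) * e := by rw [he]; linear_combination (zi - g.1 1 1) * hd'
  have h1 : a + e = 1 := by rw [ha, he]; linear_combination d * ht + hd'
  have h2 : a * e = b * c := by
    rw [ha, he, hb, hc]
    linear_combination d^2 * (hdet - zi * ht) - d^2 * hz
  have h1K : algebraMap R K a + algebraMap R K e = 1 := by rw [← map_add, h1, map_one]
  have h2K : algebraMap R K a * algebraMap R K e = algebraMap R K b * algebraMap R K c := by
    rw [← map_mul, h2, map_mul]
  by_cases h0 : algebraMap R K a = 0
  · have h0' : algebraMap R K e = 1 := by simpa [h0] using h1K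
    refine ⟨algebraMap R K b, 1, algebraMap R K c, algebraMap R K e, ?_, ?_, ?_, ?_, ?_⟩
    · linear_combination h1K - h2K - h0 + h0 * algebraMap R K e
    · rw [ha', ← h2K, h0]; simp [h0]
    · rw [hb', h0']; simp
    · rw [hc']; simp
    · rw [he']; simp
  · refine ⟨1, algebraMap R K c / algebraMap R K a, algebraMap R K a, algebraMap R K b, ?_, ?_, ?_, ?_, ?_⟩
    · field_simp
      linear_combination (algebraMap R K a) * h1K - h2K
    · rw [ha']; simp
    · rw [hb']; simp
    · rw [hc']; field_simp; simp
    · rw [he']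
      simp only [map_add, map_mul]
      field_simp
      linear_combination (algebraMap R K (z - zi)) * h2K

lemma mem_one_of (hd : IsUnit (z - zi)) {r : R} {x : K} (h : algebraMap R K r = algebraMap R K (z - zi) * x) :
    x ∈ (1 : FractionalIdeal R⁰ K) := by
  obtain ⟨d, hd'⟩ := hd.exists_left_inv
  rw [FractionalIdeal.mem_one_iff]
  refine ⟨d * r, ?_⟩
  rw [map_mul, h, ← mul_assoc, ← map_mul, hd', map_one, one_mul]

lemma Dat.mul_eq_one (hd : IsUnit (z - zi)) {g : Matrix.SpecialLinearGroup (Fin 2) R} {u1 u2 w1 w2 : K}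
    (D : Dat z zi g u1 u2 w1 w2) : J R w1 w2 * J R u1 u2 = 1 := by
  apply le_antisymm
  · have m00 : u1 * w1 ∈ (1 : FractionalIdeal R⁰ K) :=
      mem_one_of (r := g.1 0 0 - zi) hd (by rw [map_sub, D.h00]; ring)
    have m01 := mem_one_of (r := g.1 0 1) hd D.h01
    have m10 := mem_one_of (r := g.1 1 0) hd D.h10
    have m11 : u2 * w2 ∈ (1 : FractionalIdeal R⁰ K) :=
      mem_one_of (r := g.1 1 1 - zi) hd (by rw [map_sub, D.h11]; ring)
    rw [J, J, mul_add, add_mul, add_mul]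
    simp only [FractionalIdeal.spanSingleton_mul_spanSingleton]
    simp only [← FractionalIdeal.sup_eq_add, sup_le_iff,
      FractionalIdeal.spanSingleton_le_iff_mem]
    rw [mul_comm w1, mul_comm w2, mul_comm w1, mul_comm w2]
    exact ⟨⟨m00, m01⟩, m10, m11⟩
  · rw [FractionalIdeal.one_le, ← D.one]
    apply add_mem_fr
    · rw [mul_comm]
      exact FractionalIdeal.mul_mem_mul (mem_J_left _ _) (mem_J_left _ _)
    · rw [mul_comm]
      exact FractionalIdeal.mul_mem_mul (mem_J_right _ _) (mem_J_right _ _)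

lemma Dat.scale {g : Matrix.SpecialLinearGroup (Fin 2) R} {u1 u2 w1 w2 : K}
    (D : Dat z zi g u1 u2 w1 w2) {x : K} (hx : x ≠ 0) :
    Dat z zi g (x⁻¹ * u1) (x⁻¹ * u2) (x * w1) (x * w2) := by
  have key : ∀ a b : K, x⁻¹ * a * (x * b) = a * b := by intro a b; field_simp
  constructor <;> simp only [key]
  exacts [D.one, D.h00, D.h01, D.h10, D.h11]

lemma isConj_of_J_eq (hd : IsUnit (z - zi)) {g g' : Matrix.SpecialLinearGroup (Fin 2) R}
    {u1 u2 w1 w2 u1' u2' w1' w2' : K}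
    (D : Dat z zi g u1 u2 w1 w2) (D' : Dat z zi g' u1' u2' w1' w2')
    (h : J R w1 w2 = J R w1' w2') : IsConj g g' := by
  have e1 := D.mul_eq_one hd
  have e2 := D'.mul_eq_one hd
  have e3 : J R w1 w2 * J R u1' u2' = 1 := by rw [h, e2]
  have e4 : J R w1' w2' * J R u1 u2 = 1 := by rw [← h, e1]
  have key1 : ∀ {a b : K}, a ∈ J R u1' u2' → b ∈ J R w1 w2 →
      a * b ∈ (1 : FractionalIdeal R⁰ K) := by
    intro a b ha hb
    rw [← e3, mul_comm a b]
    exact FractionalIdeal.mul_mem_mul hb ha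
  have key2 : ∀ {a b : K}, a ∈ J R w1' w2' → b ∈ J R u1 u2 →
      a * b ∈ (1 : FractionalIdeal R⁰ K) := by
    intro a b ha hb
    rw [← e4]
    exact FractionalIdeal.mul_mem_mul ha hb
  obtain ⟨p, hp⟩ := (FractionalIdeal.mem_one_iff _).1
    (add_mem_fr (key1 (mem_J_left u1' u2') (mem_J_left w1 w2))
      (key2 (mem_J_right w1' w2') (mem_J_right u1 u2)))
  obtain ⟨q, hq⟩ := (FractionalIdeal.mem_one_iff _).1
    (sub_mem_fr (key1 (mem_J_left u1' u2') (mem_J_right w1 w2))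
      (key2 (mem_J_right w1' w2') (mem_J_left u1 u2)))
  obtain ⟨r, hr⟩ := (FractionalIdeal.mem_one_iff _).1
    (sub_mem_fr (key1 (mem_J_right u1' u2') (mem_J_left w1 w2))
      (key2 (mem_J_left w1' w2') (mem_J_right u1 u2)))
  obtain ⟨s, hs⟩ := (FractionalIdeal.mem_one_iff _).1
    (add_mem_fr (key1 (mem_J_right u1' u2') (mem_J_right w1 w2))
      (key2 (mem_J_left w1' w2') (mem_J_left u1 u2)))
  have inj := IsFractionRing.injective R K
  have hdet : (!![p, q; r, s] : Matrix (Fin 2) (Fin 2) R).det = 1 := by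
    rw [Matrix.det_fin_two_of]
    apply inj
    simp only [map_sub, map_mul, map_one, hp, hq, hr, hs]
    linear_combination (u1' * w1' + u2' * w2') * D.one + D'.one
  rw [isConj_iff]
  obtain ⟨k, hk⟩ : ∃ k : Matrix.SpecialLinearGroup (Fin 2) R, k.1 = !![p, q; r, s] :=
    ⟨⟨_, hdet⟩, rfl⟩
  refine ⟨k, ?_⟩
  rw [mul_inv_eq_iff_eq_mul]
  apply Subtype.ext
  have c1 := D.one
  have c2 := D'.one
  simp only [Matrix.SpecialLinearGroup.coe_mul, hk]
  ext i j
  apply inj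
  fin_cases i <;> fin_cases j <;>
    simp only [Matrix.mul_apply, Fin.sum_univ_two, Fin.zero_eta, Fin.mk_one, Matrix.of_apply,
      Matrix.cons_val_zero, Matrix.cons_val_one, Matrix.cons_val', Matrix.cons_val_fin_one,
      map_add, map_mul, hp, hq, hr, hs, D.h00, D.h01, D.h10, D.h11,
      D'.h00, D'.h01, D'.h10, D'.h11]
  · linear_combination algebraMap R K (z - zi) * u1' * w1 * (c1 - c2)
  · linear_combination algebraMap R K (z - zi) * u1' * w2 * (c1 - c2)
  · linear_combination algebraMap R K (z - zi) * u2' * w1 * (c1 - c2)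
  · linear_combination algebraMap R K (z - zi) * u2' * w2 * (c1 - c2)

lemma exists_scale (hd : IsUnit (z - zi)) {g g' : Matrix.SpecialLinearGroup (Fin 2) R}
    {u1 u2 w1 w2 u1' u2' w1' w2' : K}
    (D : Dat z zi g u1 u2 w1 w2) (D' : Dat z zi g' u1' u2' w1' w2')
    (h : IsConj g g') :
    ∃ x : Kˣ, J R w1' w2' = FractionalIdeal.spanSingleton R⁰ (x : K) * J R w1 w2 := by
  rw [isConj_iff] at h
  obtain ⟨k, hk⟩ := h
  rw [mul_inv_eq_iff_eq_mul] at hk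
  have inj := IsFractionRing.injective R K
  have hdK : algebraMap R K (z - zi) ≠ 0 := (hd.map (algebraMap R K)).ne_zero
  have hkd0 := k.2
  rw [Matrix.det_fin_two] at hkd0
  have hkd := congrArg (algebraMap R K) hkd0
  have hk' := fun i j => congrArg (algebraMap R K) (congrFun (congrFun (congrArg Subtype.val hk) i) j)
  have k00 := hk' 0 0
  have k01 := hk' 0 1
  have k10 := hk' 1 0
  have k11 := hk' 1 1
  clear hk hk'
  obtain ⟨p, hp⟩ : ∃ p, p = k.1 0 0 := ⟨_, rfl⟩
  obtain ⟨q, hq⟩ : ∃ p, p = k.1 0 1 := ⟨_, rfl⟩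
  obtain ⟨r, hr⟩ : ∃ p, p = k.1 1 0 := ⟨_, rfl⟩
  obtain ⟨s, hs⟩ : ∃ p, p = k.1 1 1 := ⟨_, rfl⟩
  simp only [Matrix.SpecialLinearGroup.coe_mul, Matrix.mul_apply, Fin.sum_univ_two, map_add,
    map_sub, map_mul, map_one, D.h00, D.h01, D.h10, D.h11,
      D'.h00, D'.h01, D'.h10, D'.h11, ← hp, ← hq, ← hr, ← hs] at k00 k01 k10 k11 hkd
  simp only [map_sub] at hdK
  clear hp hq hr hs
  obtain ⟨P, hP⟩ : ∃ P, P = algebraMap R K p := ⟨_, rfl⟩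
  obtain ⟨Q, hQ⟩ : ∃ P, P = algebraMap R K q := ⟨_, rfl⟩
  obtain ⟨U, hU⟩ : ∃ P, P = algebraMap R K r := ⟨_, rfl⟩
  obtain ⟨V, hV⟩ : ∃ P, P = algebraMap R K s := ⟨_, rfl⟩
  simp only [← hP, ← hQ, ← hU, ← hV] at k00 k01 k10 k11 hkd
  have c1 := D.one
  have c2 := D'.one
  have l00 : (P * u1 + Q * u2) * w1 = u1' * (w1' * P + w2' * U) := by
    apply mul_left_cancel₀ hdK; linear_combination k00
  have l01 : (P * u1 + Q * u2) * w2 = u1' * (w1' * Q + w2' * V) := by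
    apply mul_left_cancel₀ hdK; linear_combination k01
  have l10 : (U * u1 + V * u2) * w1 = u2' * (w1' * P + w2' * U) := by
    apply mul_left_cancel₀ hdK; linear_combination k10
  have l11 : (U * u1 + V * u2) * w2 = u2' * (w1' * Q + w2' * V) := by
    apply mul_left_cancel₀ hdK; linear_combination k11
  obtain ⟨x, hx⟩ : ∃ x, x = w1' * (P * u1 + Q * u2) + w2' * (U * u1 + V * u2) := ⟨_, rfl⟩
  have x1 : w1' * P + w2' * U = x * w1 := by
    rw [hx]; linear_combination (-(w1' * P + w2' * U)) * c2 - w1' * l00 - w2' * l10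
  have x2 : w1' * Q + w2' * V = x * w2 := by
    rw [hx]; linear_combination (-(w1' * Q + w2' * V)) * c2 - w1' * l01 - w2' * l11
  have y1 : w1' = V * (x * w1) - U * (x * w2) := by
    rw [← x1, ← x2]; linear_combination (-w1') * hkd
  have y2 : w2' = P * (x * w2) - Q * (x * w1) := by
    rw [← x1, ← x2]; linear_combination (-w2') * hkd
  have hx0 : x ≠ 0 := by
    rintro h0
    rw [y1, y2, h0] at c2
    simp at c2
  refine ⟨Units.mk0 x hx0, ?_⟩
  rw [Units.val_mk0, ← J_scale]
  apply le_antisymm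
  · rw [J_le]
    constructor
    · rw [y1, hU, hV]
      exact sub_mem_fr (amul_mem_fr _ (mem_J_left _ _)) (amul_mem_fr _ (mem_J_right _ _))
    · rw [y2, hP, hQ]
      exact sub_mem_fr (amul_mem_fr _ (mem_J_right _ _)) (amul_mem_fr _ (mem_J_left _ _))
  · rw [J_le, ← x1, ← x2, hP, hQ, hU, hV, mul_comm w1', mul_comm w2', mul_comm w1', mul_comm w2']
    exact ⟨add_mem_fr (amul_mem_fr _ (mem_J_left _ _)) (amul_mem_fr _ (mem_J_right _ _)),
      add_mem_fr (amul_mem_fr _ (mem_J_left _ _)) (amul_mem_fr _ (mem_J_right _ _))⟩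

/-- Two-generation of fractional ideals. -/
lemma exists_J (h2 : ∀ I : Ideal R, ∃ a b, I = Ideal.span {a, b}) (I : FractionalIdeal R⁰ K) :
    ∃ a b : K, I = J R a b := by
  obtain ⟨r, I', hr, hI⟩ := FractionalIdeal.exists_eq_spanSingleton_mul I
  obtain ⟨a, b, rfl⟩ := h2 I'
  refine ⟨(algebraMap R K r)⁻¹ * algebraMap R K a, (algebraMap R K r)⁻¹ * algebraMap R K b, ?_⟩
  rw [J_scale, hI, Ideal.span_insert, FractionalIdeal.coeIdeal_sup]
  simp [J, FractionalIdeal.coeIdeal_span_singleton]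

/-- Every invertible fractional ideal arises. -/
lemma exists_dat_of_unit (hz : z * zi = 1) (h2 : ∀ I : Ideal R, ∃ a b, I = Ideal.span {a, b})
    (I : (FractionalIdeal R⁰ K)ˣ) (ℓ : ℕ) (hℓ : ℓ.Prime) (hp : IsPrimitiveRoot z ℓ) :
    ∃ (g : Matrix.SpecialLinearGroup (Fin 2) R) (u1 u2 w1 w2 : K),
      Dat z zi g u1 u2 w1 w2 ∧ (I : FractionalIdeal R⁰ K) = J R w1 w2 ∧ orderOf g = ℓ ∧
      g.1.trace = z + zi := by
  obtain ⟨w1, w2, hw⟩ := exists_J h2 (I : FractionalIdeal R⁰ K)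
  have h1 : (1 : K) ∈ (I : FractionalIdeal R⁰ K) * (I⁻¹ : (FractionalIdeal R⁰ K)ˣ) := by
    rw [Units.mul_inv]; exact FractionalIdeal.one_mem_one _
  have inj := IsFractionRing.injective R K
  have hmem : ∀ {a b : K}, a ∈ ((I⁻¹ : (FractionalIdeal R⁰ K)ˣ) : FractionalIdeal R⁰ K) →
      b ∈ J R w1 w2 → ∃ r, algebraMap R K r = a * b := by
    intro a b ha hb
    rw [← FractionalIdeal.mem_one_iff R⁰, ← Units.inv_mul I]
    rw [← hw] at hb
    exact FractionalIdeal.mul_mem_mul ha hb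
  nth_rewrite 1 [hw] at h1
  rw [J, add_mul, ← FractionalIdeal.mem_coe, FractionalIdeal.coe_add, Submodule.add_eq_sup, Submodule.mem_sup] at h1
  obtain ⟨y1, hy1, y2, hy2, hy⟩ := h1
  rw [FractionalIdeal.mem_coe, FractionalIdeal.mem_singleton_mul] at hy1 hy2
  obtain ⟨u1, hu1, rfl⟩ := hy1
  obtain ⟨u2, hu2, rfl⟩ := hy2
  obtain ⟨a, ha⟩ := hmem hu1 (mem_J_left w1 w2)
  obtain ⟨b, hb⟩ := hmem hu1 (mem_J_right w1 w2)
  obtain ⟨c, hc⟩ := hmem hu2 (mem_J_left w1 w2)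
  obtain ⟨e, he⟩ := hmem hu2 (mem_J_right w1 w2)
  have t1 : a + e = 1 := by
    apply inj; rw [map_add, ha, he, map_one, ← hy]; ring
  have t2 : a * e = b * c := by
    apply inj; rw [map_mul, map_mul, ha, he, hb, hc]; ring
  have hdet : (!![zi + (z - zi) * a, (z - zi) * b; (z - zi) * c, zi + (z - zi) * e] :
      Matrix (Fin 2) (Fin 2) R).det = 1 := by
    rw [Matrix.det_fin_two_of]
    linear_combination zi * (z - zi) * t1 + (z - zi)^2 * t2 + hz
  have htr : (!![zi + (z - zi) * a, (z - zi) * b; (z - zi) * c, zi + (z - zi) * e] :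
      Matrix (Fin 2) (Fin 2) R).trace = z + zi := by
    rw [Matrix.trace_fin_two_of]
    linear_combination (z - zi) * t1
  obtain ⟨g, hgm⟩ : ∃ g : Matrix.SpecialLinearGroup (Fin 2) R, g.1 =
      !![zi + (z - zi) * a, (z - zi) * b; (z - zi) * c, zi + (z - zi) * e] :=
    ⟨⟨_, hdet⟩, rfl⟩
  rw [← hgm] at htr
  refine ⟨g, u1, u2, w1, w2, ⟨?_, ?_, ?_, ?_, ?_⟩, hw, ?_, htr⟩
  · rw [← hy]; ring
  · simp [hgm, ha]
  · simp [hgm, hb]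
  · simp [hgm, hc]
  · simp [hgm, he]
  · have : Fact ℓ.Prime := ⟨hℓ⟩
    apply orderOf_eq_prime
    · apply Subtype.ext
      rw [Matrix.SpecialLinearGroup.coe_pow]
      have hE : (!![a, b; c, e] : Matrix (Fin 2) (Fin 2) R) * !![a, b; c, e] = !![a, b; c, e] := by
        rw [Matrix.mul_fin_two]
        congr! 3
        · linear_combination a * t1 - t2
        · congr! 1
          linear_combination b * t1
        · congr! 1
          · linear_combination c * t1
          · congr! 1
            linear_combination e * t1 - t2
      have hg : (!![zi + (z - zi) * a, (z - zi) * b; (z - zi) * c, zi + (z - zi) * e] :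
          Matrix (Fin 2) (Fin 2) R) = zi • 1 + (z - zi) • !![a, b; c, e] := by
        ext i j; fin_cases i <;> fin_cases j <;> simp
      have hpow : ∀ n : ℕ, (zi • (1 : Matrix (Fin 2) (Fin 2) R) + (z - zi) • !![a, b; c, e]) ^ n
          = zi ^ n • 1 + (z ^ n - zi ^ n) • !![a, b; c, e] := by
        intro n
        induction n with
        | zero => simp
        | succ n ih =>
          rw [pow_succ, ih]
          simp only [mul_add, add_mul, smul_mul_assoc, mul_smul_comm, one_mul, mul_one, hE]
          module
      have hzi : zi ^ ℓ = 1 := by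
        have := congrArg (· ^ ℓ) hz
        simpa [mul_pow, hp.pow_eq_one] using this
      rw [hgm, hg, hpow, hzi, hp.pow_eq_one]
      simp
    · intro h
      rw [h] at htr
      simp only [Matrix.SpecialLinearGroup.coe_one, Matrix.trace_one, Fintype.card_fin] at htr
      have : (z - 1) ^ 2 = 0 := by
        push_cast at htr
        linear_combination (-z) * htr - hz
      have h1 : z = 1 := sub_eq_zero.1 (pow_eq_zero_iff (two_ne_zero) |>.1 this)
      exact hp.ne_one hℓ.one_lt h1

theorem card_eq (hz : z * zi = 1) (hd : IsUnit (z - zi)) (K : Type*) [Field K] [Algebra R K] [IsFractionRing R K]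
    (h2 : ∀ I : Ideal R, ∃ a b, I = Ideal.span {a, b})
    (ℓ : ℕ) (hℓ : ℓ.Prime) (hp : IsPrimitiveRoot z ℓ) :
    Nat.card {c : ConjClasses (Matrix.SpecialLinearGroup (Fin 2) R) //
        ∃ g, c = ConjClasses.mk g ∧ orderOf g = ℓ ∧
          (Matrix.trace (g : Matrix (Fin 2) (Fin 2) R) : R) = z + zi} =
      Nat.card (ClassGroup R) := by
  rw [Nat.card_congr (ClassGroup.equiv (R := R) K).toEquiv]
  symm
  choose G u1 u2 w1 w2 hD hI ho ht using
    fun I : (FractionalIdeal R⁰ K)ˣ => exists_dat_of_unit hz h2 I ℓ hℓ hp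
  have eqv : ∀ I I' : (FractionalIdeal R⁰ K)ˣ,
      (QuotientGroup.mk I : (FractionalIdeal R⁰ K)ˣ ⧸ (toPrincipalIdeal R K).range) =
        QuotientGroup.mk I' ↔ ∃ x : Kˣ, (I' : FractionalIdeal R⁰ K) =
          FractionalIdeal.spanSingleton R⁰ (x : K) * I := by
    intro I I'
    rw [QuotientGroup.eq, MonoidHom.mem_range]
    refine exists_congr fun x => ?_
    rw [eq_inv_mul_iff_mul_eq, ← Units.val_inj, Units.val_mul, coe_toPrincipalIdeal, mul_comm,
      eq_comm]
  refine Nat.card_eq_of_bijective (fun q => ⟨ConjClasses.mk (G q.out), _, rfl, ho _, ht _⟩) ⟨?_, ?_⟩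
  · intro q q' h
    simp only [Subtype.mk.injEq, ConjClasses.mk_eq_mk_iff_isConj] at h
    obtain ⟨x, hx⟩ := exists_scale hd (hD _) (hD _) h
    rw [← hI, ← hI] at hx
    rw [← q.out_eq', ← q'.out_eq']
    exact (eqv _ _).2 ⟨x, hx⟩
  · rintro ⟨c, g, rfl, hg, hgt⟩
    obtain ⟨a1, a2, b1, b2, D⟩ := exists_dat (K := K) hz hd g hgt
    have e1 := D.mul_eq_one hd
    let I : (FractionalIdeal R⁰ K)ˣ := ⟨J R b1 b2, J R a1 a2, e1, by rw [mul_comm, e1]⟩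
    refine ⟨QuotientGroup.mk I, ?_⟩
    simp only [Subtype.mk.injEq, ConjClasses.mk_eq_mk_iff_isConj]
    obtain ⟨x, hx⟩ := (eqv _ I).1 (Quotient.out_eq' (QuotientGroup.mk I))
    rw [hI (Quotient.out _), ← J_scale] at hx
    exact isConj_of_J_eq hd ((hD _).scale x.ne_zero) D hx.symm


section SInt

variable {K : Type*} [Field K] [NumberField K] (S : Set (HeightOneSpectrum (𝓞 K)))

lemma exists_denom {A K : Type*} [CommRing A] [IsDedekindDomain A] [Field K] [Algebra A K]
    [IsFractionRing A K] [Finite (ClassGroup A)] (S : Set (HeightOneSpectrum A)) (x : K)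
    (hx : ∀ v ∉ S, v.valuation K x ≤ 1) : ∃ s n : A, s ≠ 0 ∧ (∀ v ∉ S, s ∉ v.asIdeal) ∧
    x * algebraMap A K s = algebraMap A K n := by
  obtain ⟨D, hDdef⟩ : ∃ D : Ideal A, ∀ d, d ∈ D ↔
      ∃ n, x * algebraMap A K d = algebraMap A K n := by
    refine ⟨{ carrier := {d | ∃ n, x * algebraMap A K d = algebraMap A K n}
              add_mem' := ?_
              zero_mem' := ?_
              smul_mem' := ?_ }, fun d => Iff.rfl⟩
    · rintro a b ⟨n, hn⟩ ⟨m, hm⟩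
      exact ⟨n + m, by rw [map_add, map_add, mul_add, hn, hm]⟩
    · exact ⟨0, by simp⟩
    · rintro c a ⟨n, hn⟩
      exact ⟨c * n, by rw [smul_eq_mul, map_mul, map_mul, ← hn]; ring⟩
  have hD0 : D ≠ ⊥ := by
    obtain ⟨a, b, hb, hab⟩ := IsFractionRing.div_surjective (A := A) (x : K)
    intro h
    have hb0 : b ≠ 0 := nonZeroDivisors.ne_zero hb
    have hbD : b ∈ D := by
      rw [hDdef]
      refine ⟨a, ?_⟩
      rw [← hab]
      have : algebraMap A K b ≠ 0 := by simpa using hb0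
      field_simp
    rw [h] at hbD
    exact hb0 (by simpa using hbD)
  obtain ⟨h, hh, hprin⟩ : ∃ h : ℕ, h ≠ 0 ∧ (D ^ h).IsPrincipal := by
    have hDm : D ∈ nonZeroDivisors (Ideal A) := mem_nonZeroDivisors_of_ne_zero hD0
    obtain ⟨h, hh, hpow⟩ : ∃ h : ℕ, h ≠ 0 ∧ (ClassGroup.mk0 ⟨D, hDm⟩) ^ h = 1 :=
      ⟨Nat.card (ClassGroup A), Nat.card_pos.ne', pow_card_eq_one'⟩
    refine ⟨h, hh, ?_⟩
    rw [← ClassGroup.mk0_eq_one_iff (pow_mem hDm h), ← hpow, ← map_pow]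
    congr 1
  obtain ⟨s, hs⟩ := hprin
  have hsmem : s ∈ D ^ h := by rw [hs]; exact Submodule.mem_span_singleton_self s
  obtain ⟨n, hn⟩ := (hDdef s).1 (Ideal.pow_le_self hh hsmem)
  refine ⟨s, n, ?_, ?_, hn⟩
  · rintro rfl
    have : D ^ h = ⊥ := by rw [hs]; simp
    exact pow_ne_zero h hD0 this
  · intro v hv hsv
    have hle : D ^ h ≤ v.asIdeal := by
      rw [hs]; exact (Submodule.span_singleton_le_iff_mem _ _).2 hsv
    have hle' : D ≤ v.asIdeal := v.isPrime.le_of_pow_le hle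
    obtain ⟨m, d, hd⟩ := v.exists_primeCompl_mul_eq_of_integer (x : K)
      (hx v hv)
    exact d.2 (hle' ((hDdef _).2 ⟨m, hd⟩))

lemma exists_denom' (x : S.integer K) : ∃ (s n : 𝓞 K) (t : S.integer K), s ≠ 0 ∧
    t * algebraMap (𝓞 K) (S.integer K) s = 1 ∧
    x * algebraMap (𝓞 K) (S.integer K) s = algebraMap (𝓞 K) (S.integer K) n := by
  obtain ⟨s, n, h0, hs, hn⟩ := exists_denom S (x : K) (fun v hv => S.integer_valuation_le_one K x hv)
  have h0' : algebraMap (𝓞 K) K s ≠ 0 := by simpa using h0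
  refine ⟨s, n, ⟨(algebraMap (𝓞 K) K s)⁻¹, ?_⟩, h0, ?_, ?_⟩
  · intro v hv
    have := (v.valuation_eq_one_iff_notMem (K := K)).2 (hs v hv)
    rw [map_inv₀, this, inv_one]
  · apply Subtype.ext
    exact inv_mul_cancel₀ h0'
  · exact Subtype.ext hn

lemma two_gen (I : Ideal (S.integer K)) : ∃ a b, I = Ideal.span {a, b} := by
  have hI : I = (I.comap (algebraMap (𝓞 K) (S.integer K))).map (algebraMap (𝓞 K) (S.integer K)) := by
    apply le_antisymm
    · intro x hx
      obtain ⟨s, n, t, -, ht, hn⟩ := exists_denom' S x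
      have hx' : x = t * algebraMap (𝓞 K) (S.integer K) n := by
        rw [← hn]; linear_combination (-x) * ht
      rw [hx']
      refine Ideal.mul_mem_left _ _ (Ideal.mem_map_of_mem _ ?_)
      rw [Ideal.mem_comap, ← hn]
      exact Ideal.mul_mem_right _ _ hx
    · exact Ideal.map_comap_le
  obtain ⟨a, b, hab⟩ : ∃ a b, I.comap (algebraMap (𝓞 K) (S.integer K)) = Ideal.span {a, b} := by
    by_cases h : I.comap (algebraMap (𝓞 K) (S.integer K)) = ⊥
    · exact ⟨0, 0, by rw [h]; simp⟩
    · obtain ⟨a, ha, ha0⟩ := Submodule.exists_mem_ne_zero_of_ne_bot h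
      exact ⟨a, IsDedekindDomain.exists_eq_span_pair ha ha0⟩
  refine ⟨algebraMap _ _ a, algebraMap _ _ b, ?_⟩
  rw [hI, hab, Ideal.map_span, Set.image_pair]

lemma isFractionRing_integer : IsFractionRing (S.integer K) K := by
  have inj : Function.Injective (algebraMap (S.integer K) K) := Subtype.val_injective
  have : FaithfulSMul (S.integer K) K := (faithfulSMul_iff_algebraMap_injective _ _).2 inj
  refine IsFractionRing.of_field _ _ fun x => ?_
  obtain ⟨a, b, -, hab⟩ := IsFractionRing.div_surjective (A := 𝓞 K) x
  exact ⟨algebraMap _ _ a, algebraMap _ _ b, hab.symm⟩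

end SInt

end SLConj

theorem card_conjClasses_order_ell_eq_classNumber (K : Type*) [Field K] [NumberField K]
    (ℓ : ℕ) (hℓ : ℓ.Prime) (hℓodd : Odd ℓ)
    (ζ : K) (hζ : IsPrimitiveRoot ζ ℓ)
    (S : Set (HeightOneSpectrum (𝓞 K))) (hS : S.Finite)
    (hℓinv : IsUnit (ℓ : S.integer K)) :
    Nat.card {c : ConjClasses (Matrix.SpecialLinearGroup (Fin 2) (S.integer K)) //
        ∃ g, c = ConjClasses.mk g ∧ orderOf g = ℓ ∧
          ((Matrix.trace (g : Matrix (Fin 2) (Fin 2) (S.integer K)) : S.integer K) : K)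
            = ζ + ζ⁻¹} =
      Nat.card (ClassGroup (S.integer K)) := by
  have := SLConj.isFractionRing_integer (K := K) S
  obtain ⟨z0, hz0⟩ : ∃ z0 : 𝓞 K, algebraMap (𝓞 K) K z0 = ζ :=
    ⟨⟨ζ, hζ.isIntegral hℓ.pos⟩, rfl⟩
  obtain ⟨z, hz⟩ : ∃ z : S.integer K, (z : K) = ζ := ⟨algebraMap (𝓞 K) (S.integer K) z0, hz0⟩
  have hp : IsPrimitiveRoot z ℓ := by
    refine IsPrimitiveRoot.of_map_of_injective (f := (S.integer K).val) ?_ Subtype.val_injective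
    change IsPrimitiveRoot (z : K) ℓ
    rw [hz]; exact hζ
  have hzi : z * z ^ (ℓ - 1) = 1 := by
    rw [← pow_succ', Nat.sub_add_cancel hℓ.one_le, hp.pow_eq_one]
  have hzi' : ((z ^ (ℓ - 1) : S.integer K) : K) = ζ⁻¹ := by
    apply eq_inv_of_mul_eq_one_right
    rw [← hz, ← MulMemClass.coe_mul, hzi]; rfl
  have hd : IsUnit (z - z ^ (ℓ - 1)) := by
    obtain ⟨m, rfl⟩ : ∃ m, ℓ = m + 1 := ⟨ℓ - 1, (Nat.sub_add_cancel hℓ.one_le).symm⟩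
    have h3 : 2 ≤ m := by
      have := hℓ.two_le
      rcases hℓodd with ⟨k, hk⟩
      omega
    have hprod := hp.prod_one_sub_pow_eq_order
    have hdvd : (1 - z ^ 2) ∣ ((m + 1 : ℕ) : S.integer K) := by
      push_cast
      rw [← hprod]
      exact Finset.dvd_prod_of_mem (fun k => 1 - z ^ (k + 1)) (Finset.mem_range.2 (show 1 < m by omega))
    have hu := isUnit_of_dvd_unit hdvd hℓinv
    have hzu : IsUnit (z ^ (m + 1 - 1)) := IsUnit.of_mul_eq_one_right _ hzi
    have : z - z ^ (m + 1 - 1) = -(z ^ (m + 1 - 1) * (1 - z ^ 2)) := by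
      linear_combination (-z) * hzi
    rw [this]
    exact (hzu.mul hu).neg
  rw [← SLConj.card_eq hzi hd K (SLConj.two_gen S) ℓ hℓ hp]
  have : ∀ t : S.integer K, (t : K) = ζ + ζ⁻¹ ↔ t = z + z ^ (ℓ - 1) := by
    intro t
    rw [← hzi', ← hz, ← Subtype.val_inj]
    rfl
  simp only [this]
end

section
/- Let K be a number field, S a finite set of finite places of K, and ℓ a prime. Then the set of conjugacy classes of elements of order exactly ℓ in SL₂(O_{K,S}) is finite. -/
open IsDedekindDomain NumberField

theorem aux_unit_fg (K : Type*) [Field K] [NumberField K]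
    (S : Set (HeightOneSpectrum (𝓞 K))) (hS : S.Finite) :
    Module.Finite ℤ (Additive (S.unit K)) := by
  have : Finite S := hS
  let f : S.unit K →* (S → Multiplicative ℤ) :=
    { toFun := fun u v => v.1.valuationOfNeZero (u : Kˣ)
      map_one' := by ext; simp
      map_mul' := by intros; ext; simp }
  let f' : Additive (S.unit K) →+ (S → ℤ) :=
    { toFun := fun u v => (f u.toMul v).toAdd
      map_zero' := by ext; simp
      map_add' := by intros; ext; simp }
  let F := f'.toIntLinearMap
  let j : (𝓞 K)ˣ →* S.unit K :=
    { toFun := fun u => ⟨Units.map (algebraMap (𝓞 K) K).toMonoidHom u, fun v hv => by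
        have := v.valuation_of_unit_eq (K := K) u
        have h2 := v.valuationOfNeZero_eq (Units.map (algebraMap (𝓞 K) K).toMonoidHom u)
        rw [← h2]
        erw [this]; rfl⟩
      map_one' := by ext; simp
      map_mul' := by intros; ext; simp }
  let J := (MonoidHom.toAdditive j).toIntLinearMap
  constructor
  apply Submodule.fg_of_fg_map_of_fg_inf_ker F
  · exact IsNoetherian.noetherian _
  · rw [top_inf_eq]
    have : LinearMap.ker F ≤ LinearMap.range J := by
      intro x hx
      have hx' : ∀ v : HeightOneSpectrum (𝓞 K), v.valuation K ((x.toMul : Kˣ) : K) = 1 := by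
        intro v
        by_cases hv : v ∈ S
        · have := congrFun (show F x = 0 from hx) ⟨v, hv⟩
          rw [← v.valuationOfNeZero_eq]
          have h3 : v.valuationOfNeZero (x.toMul : Kˣ) = 1 := by
            apply Multiplicative.toAdd.injective
            exact this
          rw [h3]; rfl
        · exact x.toMul.2 v hv
      obtain ⟨y, hy⟩ := HeightOneSpectrum.mem_integers_of_valuation_le_one K _ (fun v => (hx' v).le)
      obtain ⟨z, hz⟩ := HeightOneSpectrum.mem_integers_of_valuation_le_one K
        (((x.toMul : Kˣ) : K)⁻¹) (fun v => by rw [map_inv₀, hx' v, inv_one])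
      have hyz : y * z = 1 := by
        apply FaithfulSMul.algebraMap_injective (𝓞 K) K
        rw [map_mul, map_one]
        erw [hy, hz]
        exact mul_inv_cancel₀ (Units.ne_zero _)
      have hzy : z * y = 1 := by rw [mul_comm, hyz]
      refine ⟨Additive.ofMul ⟨y, z, hyz, hzy⟩, ?_⟩
      apply Additive.toMul.injective
      ext
      exact hy
    have hr : (LinearMap.range J).FG := by
      rw [LinearMap.range_eq_map]; exact Submodule.FG.map _ Module.Finite.fg_top
    have : IsNoetherian ℤ (LinearMap.range J) := isNoetherian_of_fg_of_noetherian _ hr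
    exact (isNoetherian_submodule.mp this) _ ‹_›

theorem aux_unit_sq (K : Type*) [Field K] [NumberField K]
    (S : Set (HeightOneSpectrum (𝓞 K))) (hS : S.Finite) :
    Finite ((S.integer K)ˣ ⧸ (powMonoidHom 2 : (S.integer K)ˣ →* (S.integer K)ˣ).range) := by
  have := aux_unit_fg K S hS
  have h1 : AddGroup.FG (Additive (S.unit K)) := Module.Finite.iff_addGroup_fg.mp this
  have h2 : Group.FG (S.unit K) := GroupFG.iff_add_fg.mpr h1
  have h3 : Group.FG (S.integer K)ˣ :=
    Group.fg_of_surjective (f := (S.unitEquivUnitsInteger K).toMonoidHom)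
      (S.unitEquivUnitsInteger K).surjective
  apply CommGroup.finite_of_fg_isMulTorsion
  intro q
  induction q using QuotientGroup.induction_on with
  | H u =>
    rw [isOfFinOrder_iff_pow_eq_one]
    refine ⟨2, by norm_num, ?_⟩
    rw [← QuotientGroup.mk_pow, QuotientGroup.eq_one_iff]
    exact ⟨u, rfl⟩

theorem aux_class (F : Type*) [Field F] [NumberField F] :
    ∃ N : ClassGroup (𝓞 F) → Ideal (𝓞 F), ∀ p q : F, ¬ (p = 0 ∧ q = 0) →
      ∃ α : F, α ≠ 0 ∧ ∃ i, (∃ m ∈ N i, α * p = algebraMap (𝓞 F) F m) ∧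
        (∃ m ∈ N i, α * q = algebraMap (𝓞 F) F m) ∧
        ∀ x ∈ N i, ∃ o o' : 𝓞 F, algebraMap (𝓞 F) F x = o * (α * p) + o' * (α * q) := by
  choose J hJ using ClassGroup.mk0_surjective (R := 𝓞 F)
  refine ⟨fun i => J i, fun p q hpq => ?_⟩
  obtain ⟨⟨b, hb⟩, hbi⟩ := IsLocalization.exist_integer_multiples (nonZeroDivisors (𝓞 F))
    (Finset.univ : Finset (Fin 2)) ![p, q]
  obtain ⟨P, hP⟩ := hbi 0 (by simp)
  obtain ⟨Q, hQ⟩ := hbi 1 (by simp)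
  have hb0 : (b : F) ≠ 0 := by simpa using nonZeroDivisors.ne_zero hb
  replace hP : (P : F) = b * p := by simpa [Algebra.smul_def] using hP
  replace hQ : (Q : F) = b * q := by simpa [Algebra.smul_def] using hQ
  let I : Ideal (𝓞 F) := Ideal.span {P, Q}
  have hI : I ≠ ⊥ := by
    intro h
    have : P = 0 ∧ Q = 0 := by simpa [I, Ideal.span_eq_bot] using h
    apply hpq
    constructor
    · simpa [this.1, hb0] using hP.symm
    · simpa [this.2, hb0] using hQ.symm
  let I' : nonZeroDivisors (Ideal (𝓞 F)) := ⟨I, mem_nonZeroDivisors_iff_ne_zero.mpr hI⟩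
  obtain ⟨x, y, hx, hy, hxy⟩ := ClassGroup.mk0_eq_mk0_iff.mp (hJ (ClassGroup.mk0 I')).symm
  have hx0 : (x : F) ≠ 0 := by simpa using hx
  have hy0 : (y : F) ≠ 0 := by simpa using hy
  have key : ∀ R ∈ I, ∃ m ∈ (J (ClassGroup.mk0 I') : Ideal (𝓞 F)), x * R = y * m := by
    intro R hR
    have : x * R ∈ Ideal.span {x} * I := Ideal.mul_mem_mul (Ideal.mem_span_singleton_self x) hR
    change Ideal.span {x} * I = _ at hxy
    rw [hxy, Ideal.mem_span_singleton_mul] at this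
    obtain ⟨m, hm, h⟩ := this
    exact ⟨m, hm, h.symm⟩
  refine ⟨x * b / y, by simp only [ne_eq, div_eq_zero_iff, mul_eq_zero]; tauto, ClassGroup.mk0 I', ?_, ?_, ?_⟩
  · obtain ⟨m, hm, h⟩ := key P (Ideal.subset_span (by simp))
    refine ⟨m, hm, ?_⟩
    have h' : (x : F) * P = y * m := by exact_mod_cast congrArg (algebraMap (𝓞 F) F) h
    rw [hP] at h'
    field_simp
    linear_combination h'
  · obtain ⟨m, hm, h⟩ := key Q (Ideal.subset_span (by simp))
    refine ⟨m, hm, ?_⟩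
    have h' : (x : F) * Q = y * m := by exact_mod_cast congrArg (algebraMap (𝓞 F) F) h
    rw [hQ] at h'
    field_simp
    linear_combination h'
  · intro z hz
    have : y * z ∈ Ideal.span {y} * (J (ClassGroup.mk0 I') : Ideal (𝓞 F)) :=
      Ideal.mul_mem_mul (Ideal.mem_span_singleton_self y) hz
    change Ideal.span {x} * I = _ at hxy
    rw [← hxy, Ideal.mem_span_singleton_mul] at this
    obtain ⟨m, hm, h⟩ := this
    obtain ⟨o, o', ho⟩ := Ideal.mem_span_pair.mp hm
    refine ⟨o, o', ?_⟩
    have h' : (x : F) * m = y * z := by exact_mod_cast congrArg (algebraMap (𝓞 F) F) h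
    have ho' : (o : F) * P + o' * Q = m := by exact_mod_cast congrArg (algebraMap (𝓞 F) F) ho
    rw [hP, hQ] at ho'
    field_simp
    linear_combination -(x : F) * ho' - h'

section AuxMat
open Matrix

theorem aux_finite_color {G C : Type*} [Group G] [Finite C] (X : Set G) (r : G → C → Prop)
    (h1 : ∀ g ∈ X, ∃ c, r g c) (h2 : ∀ g ∈ X, ∀ g' ∈ X, ∀ c, r g c → r g' c → IsConj g g') :
    (ConjClasses.mk '' X).Finite := by
  classical
  have : Finite (Set.univ : Set C) := inferInstance
  choose f hf using h1
  let F : ConjClasses G → Option C := fun k =>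
    if h : ∃ g, ∃ hg : g ∈ X, ConjClasses.mk g = k then some (f h.choose h.choose_spec.choose) else none
  apply Set.Finite.of_finite_image (f := F) (Set.toFinite _)
  rintro _ ⟨g, hg, rfl⟩ _ ⟨g', hg', rfl⟩ h
  have e1 : ∃ a, ∃ ha : a ∈ X, ConjClasses.mk a = ConjClasses.mk g := ⟨g, hg, rfl⟩
  have e2 : ∃ a, ∃ ha : a ∈ X, ConjClasses.mk a = ConjClasses.mk g' := ⟨g', hg', rfl⟩
  simp only [F, dif_pos e1, dif_pos e2, Option.some.injEq] at h
  rw [← e1.choose_spec.choose_spec, ← e2.choose_spec.choose_spec, ConjClasses.mk_eq_mk_iff_isConj]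
  exact h2 _ e1.choose_spec.choose _ e2.choose_spec.choose _ (hf _ e1.choose_spec.choose)
    (h ▸ hf _ e2.choose_spec.choose)

/-- passing from `GL₂`-conjugacy to `SL₂`-conjugacy. -/
theorem aux_gl_sl {R C : Type*} [CommRing R] [Finite C]
    (hU : Finite (Rˣ ⧸ (powMonoidHom 2 : Rˣ →* Rˣ).range))
    (X : Set (SpecialLinearGroup (Fin 2) R)) (r : SpecialLinearGroup (Fin 2) R → C → Prop)
    (h1 : ∀ g ∈ X, ∃ c, r g c)
    (h2 : ∀ g ∈ X, ∀ g' ∈ X, ∀ c, r g c → r g' c →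
      ∃ P Q : Matrix (Fin 2) (Fin 2) R, P * Q = 1 ∧ Q * P = 1 ∧ P * g.1 = g'.1 * P) :
    (ConjClasses.mk '' X).Finite := by
  classical
  let rep : C → SpecialLinearGroup (Fin 2) R := fun c =>
    if h : ∃ g ∈ X, r g c then h.choose else 1
  have hrep : ∀ g ∈ X, ∀ c, r g c → rep c ∈ X ∧ r (rep c) c := by
    intro g hg c hc
    have h : ∃ g ∈ X, r g c := ⟨g, hg, hc⟩
    simp only [rep, dif_pos h]
    exact h.choose_spec
  apply aux_finite_color (C := C × (Rˣ ⧸ (powMonoidHom 2 : Rˣ →* Rˣ).range)) X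
    (fun g d => r g d.1 ∧ ∃ P Q : Matrix (Fin 2) (Fin 2) R, ∃ u : Rˣ, P * Q = 1 ∧ Q * P = 1 ∧
      P * g.1 = (rep d.1).1 * P ∧ P.det = u ∧ QuotientGroup.mk u = d.2)
  · intro g hg
    obtain ⟨c, hc⟩ := h1 g hg
    obtain ⟨P, Q, hPQ, hQP, h⟩ := h2 g hg _ (hrep g hg c hc).1 c hc (hrep g hg c hc).2
    let u : Rˣ := ⟨P.det, Q.det, by rw [← det_mul, hPQ, det_one], by rw [← det_mul, hQP, det_one]⟩
    exact ⟨(c, QuotientGroup.mk u), hc, P, Q, u, hPQ, hQP, h, rfl, rfl⟩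
  · rintro g hg g' hg' ⟨c, d⟩ ⟨-, P, Q, u, hPQ, hQP, h, hu, rfl⟩ ⟨-, P', Q', u', hPQ', hQP', h', hu', hd⟩
    rw [QuotientGroup.eq] at hd
    obtain ⟨w, hw⟩ := hd
    simp only [powMonoidHom_apply] at hw
    have hw' : u = u' * w ^ 2 := by rw [hw]; simp
    have hdQ : Q'.det * u' = 1 := by rw [← hu', ← det_mul, hQP', det_one]
    let Z : Matrix (Fin 2) (Fin 2) R := (↑(w⁻¹) : R) • (Q' * P)
    have hZ : Z.det = 1 := by
      have hw2 : (↑(w⁻¹) : R) * w = 1 := by simp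
      simp only [Z, det_smul, Fintype.card_fin, det_mul, hu, hw', Units.val_mul, Units.val_pow_eq_pow_val]
      linear_combination (w⁻¹ : Rˣ).val^2 * w^2 * hdQ + ((w⁻¹ : Rˣ).val * w + 1) * hw2
    rw [isConj_iff]
    let ZZ : SpecialLinearGroup (Fin 2) R := ⟨Z, hZ⟩
    refine ⟨ZZ, ?_⟩
    rw [mul_inv_eq_iff_eq_mul]
    apply Subtype.ext
    change Z * g.1 = g'.1 * Z
    have e : g'.1 * Q' = Q' * (rep c).1 := by
      calc g'.1 * Q' = (Q' * P') * g'.1 * Q' := by rw [hQP', one_mul]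
        _ = Q' * (P' * g'.1) * Q' := by simp only [mul_assoc]
        _ = Q' * (rep c).1 * (P' * Q') := by rw [h']; simp only [mul_assoc]
        _ = _ := by rw [hPQ', mul_one]
    simp only [Z, smul_mul_assoc, mul_smul_comm]
    rw [← mul_assoc, e, mul_assoc, mul_assoc, h]

theorem aux_finite_sub {E : Type*} [AddCommGroup E] (N : AddSubgroup E) (hN : N.FG) (D : ℕ)
    (hD : D ≠ 0) : Finite {H : AddSubgroup E // H ≤ N ∧ ∀ x ∈ N, D • x ∈ H} := by
  have : AddGroup.FG N := (AddGroup.fg_iff_addSubgroup_fg N).mpr hN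
  let T : AddSubgroup N := (nsmulAddMonoidHom D : N →+ N).range
  have hfin : Finite (N ⧸ T) := by
    apply AddCommGroup.finite_of_fg_isAddTorsion
    intro q
    induction q using QuotientAddGroup.induction_on with
    | H u =>
      rw [isOfFinAddOrder_iff_nsmul_eq_zero]
      refine ⟨D, Nat.pos_of_ne_zero hD, ?_⟩
      rw [← QuotientAddGroup.mk_nsmul, QuotientAddGroup.eq_zero_iff]
      exact ⟨u, rfl⟩
  let f : {H : AddSubgroup E // H ≤ N ∧ ∀ x ∈ N, D • x ∈ H} → Set (N ⧸ T) :=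
    fun H => {q | ∃ x : N, (x : E) ∈ H.1 ∧ QuotientAddGroup.mk x = q}
  have key : ∀ H H' : {H : AddSubgroup E // H ≤ N ∧ ∀ x ∈ N, D • x ∈ H}, f H = f H' → H.1 ≤ H'.1 := by
    intro H H' h x hx
    have : (QuotientAddGroup.mk (⟨x, H.2.1 hx⟩ : N) : N ⧸ T) ∈ f H' := by
      rw [← h]; exact ⟨_, hx, rfl⟩
    obtain ⟨y, hy, hxy⟩ := this
    rw [QuotientAddGroup.eq] at hxy
    obtain ⟨z, hz⟩ := hxy
    have hz' : D • (z : E) = -y + x := by simpa using congrArg (Subtype.val) hz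
    have : x = y + D • (z : E) := by rw [hz']; abel
    rw [this]
    exact H'.1.add_mem hy (H'.2.2 _ z.2)
  exact Finite.of_injective f fun H H' h => Subtype.ext (le_antisymm (key _ _ h) (key _ _ h.symm))

/-- Finiteness from embeddings into finitely many lattices. -/
theorem aux_lattice {K : Type*} [Field K] [NumberField K] (R : Subalgebra (𝓞 K) K)
    (hU : Finite (Rˣ ⧸ (powMonoidHom 2 : Rˣ →* Rˣ).range))
    {E ι : Type*} [AddCommGroup E] [Module K E] [Finite ι] (ρ : E →ₗ[K] E)
    (N : ι → AddSubgroup E) (hN : ∀ i, (N i).FG) (D : ℕ) (hD : D ≠ 0)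
    (X : Set (SpecialLinearGroup (Fin 2) R))
    (h : ∀ g ∈ X, ∃ i, ∃ p q : E, (∀ x y : K, x • p + y • q = 0 → x = 0 ∧ y = 0) ∧
      ρ p = (g.1 0 0 : K) • p + (g.1 1 0 : K) • q ∧
      ρ q = (g.1 0 1 : K) • p + (g.1 1 1 : K) • q ∧
      p ∈ N i ∧ q ∈ N i ∧ ∀ x ∈ N i, ∃ r s : R, D • x = (r : K) • p + (s : K) • q) :
    (ConjClasses.mk '' X).Finite := by
  have := fun i => aux_finite_sub (N i) (hN i) D hD
  apply aux_gl_sl (C := Σ i, {H : AddSubgroup E // H ≤ N i ∧ ∀ x ∈ N i, D • x ∈ H}) hU X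
    (fun g c => ∃ p q : E, (∀ x y : K, x • p + y • q = 0 → x = 0 ∧ y = 0) ∧
      ρ p = (g.1 0 0 : K) • p + (g.1 1 0 : K) • q ∧
      ρ q = (g.1 0 1 : K) • p + (g.1 1 1 : K) • q ∧
      p ∈ N c.1 ∧ q ∈ N c.1 ∧
      ∀ x, x ∈ c.2.1 ↔ x ∈ N c.1 ∧ ∃ r s : R, x = (r : K) • p + (s : K) • q)
  · intro g hg
    obtain ⟨i, p, q, hi, h1, h2, hp, hq, hx⟩ := h g hg
    let H : AddSubgroup E :=
      { carrier := {x | x ∈ N i ∧ ∃ r s : R, x = (r : K) • p + (s : K) • q}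
        zero_mem' := ⟨zero_mem _, 0, 0, by simp⟩
        add_mem' := by
          rintro _ _ ⟨ha, r, s, rfl⟩ ⟨hb, r', s', rfl⟩
          refine ⟨add_mem ha hb, r + r', s + s', ?_⟩
          push_cast
          module
        neg_mem' := by
          rintro _ ⟨ha, r, s, rfl⟩
          refine ⟨neg_mem ha, -r, -s, ?_⟩
          push_cast
          module }
    exact ⟨⟨i, H, fun x hx => hx.1, fun x hxi => ⟨nsmul_mem hxi _, hx x hxi⟩⟩,
      p, q, hi, h1, h2, hp, hq, fun x => Iff.rfl⟩
  · rintro g hg g' hg' ⟨i, H, hH⟩ ⟨p, q, hi, h1, h2, hp, hq, hx⟩ ⟨p', q', hi', h1', h2', hp', hq', hx'⟩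
    dsimp only at *
    obtain ⟨-, a, c, hac⟩ := (hx' p).mp ((hx p).mpr ⟨hp, 1, 0, by simp⟩)
    obtain ⟨-, b, d, hbd⟩ := (hx' q).mp ((hx q).mpr ⟨hq, 0, 1, by simp⟩)
    obtain ⟨-, a', c', hac'⟩ := (hx p').mp ((hx' p').mpr ⟨hp', 1, 0, by simp⟩)
    obtain ⟨-, b', d', hbd'⟩ := (hx q').mp ((hx' q').mpr ⟨hq', 0, 1, by simp⟩)
    have i1 : ∀ x y z w : R, (x : K) • p + (y : K) • q = (z : K) • p + (w : K) • q → x = z ∧ y = w := by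
      intro x y z w hh
      have := hi (x - z) (y - w) (by rw [← sub_eq_zero] at hh; rw [← hh]; module)
      exact ⟨Subtype.ext (sub_eq_zero.mp this.1), Subtype.ext (sub_eq_zero.mp this.2)⟩
    have i2 : ∀ x y z w : R, (x : K) • p' + (y : K) • q' = (z : K) • p' + (w : K) • q' → x = z ∧ y = w := by
      intro x y z w hh
      have := hi' (x - z) (y - w) (by rw [← sub_eq_zero] at hh; rw [← hh]; module)
      exact ⟨Subtype.ext (sub_eq_zero.mp this.1), Subtype.ext (sub_eq_zero.mp this.2)⟩
    have e1 := i1 (a * a' + c * b') (a * c' + c * d') 1 0 (by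
      push_cast
      calc _ = (a : K) • ((a' : K) • p + (c' : K) • q) + (c : K) • ((b' : K) • p + (d' : K) • q) := by module
        _ = p := by rw [← hac', ← hbd', ← hac]
        _ = _ := by module)
    have e2 := i1 (b * a' + d * b') (b * c' + d * d') 0 1 (by
      push_cast
      calc _ = (b : K) • ((a' : K) • p + (c' : K) • q) + (d : K) • ((b' : K) • p + (d' : K) • q) := by module
        _ = q := by rw [← hac', ← hbd', ← hbd]
        _ = _ := by module)
    have e3 := i2 (g.1 0 0 * a + g.1 1 0 * b) (g.1 0 0 * c + g.1 1 0 * d)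
      (a * g'.1 0 0 + c * g'.1 0 1) (a * g'.1 1 0 + c * g'.1 1 1) (by
      push_cast
      calc _ = (g.1 0 0 : K) • ((a : K) • p' + (c : K) • q') + (g.1 1 0 : K) • ((b : K) • p' + (d : K) • q') := by module
        _ = ρ ((a : K) • p' + (c : K) • q') := by rw [← hac, ← hbd, ← h1]
        _ = _ := by rw [map_add, map_smul, map_smul, h1', h2']; module)
    have e4 := i2 (g.1 0 1 * a + g.1 1 1 * b) (g.1 0 1 * c + g.1 1 1 * d)
      (b * g'.1 0 0 + d * g'.1 0 1) (b * g'.1 1 0 + d * g'.1 1 1) (by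
      push_cast
      calc _ = (g.1 0 1 : K) • ((a : K) • p' + (c : K) • q') + (g.1 1 1 : K) • ((b : K) • p' + (d : K) • q') := by module
        _ = ρ ((b : K) • p' + (d : K) • q') := by rw [← hac, ← hbd, ← h2]
        _ = _ := by rw [map_add, map_smul, map_smul, h1', h2']; module)
    have hQP : !![a', b'; c', d'] * !![a, b; c, d] = 1 := by
      ext i j
      fin_cases i <;> fin_cases j <;> simp [Matrix.mul_apply, Fin.sum_univ_two]
      · exact_mod_cast (by linear_combination e1.1 : a' * a + b' * c = 1)
      · exact_mod_cast (by linear_combination e2.1 : a' * b + b' * d = 0)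
      · exact_mod_cast (by linear_combination e1.2 : c' * a + d' * c = 0)
      · exact_mod_cast (by linear_combination e2.2 : c' * b + d' * d = 1)
    refine ⟨!![a, b; c, d], !![a', b'; c', d'], mul_eq_one_comm.mp hQP, hQP, ?_⟩
    ext i j
    fin_cases i <;> fin_cases j <;> simp [Matrix.mul_apply, Fin.sum_univ_two]
    · have := congrArg (Subtype.val) e3.1; push_cast at this; linear_combination this
    · have := congrArg (Subtype.val) e4.1; push_cast at this; linear_combination this
    · have := congrArg (Subtype.val) e3.2; push_cast at this; linear_combination this
    · have := congrArg (Subtype.val) e4.2; push_cast at this; linear_combination this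


theorem aux_den {K : Type*} [Field K] [NumberField K] (x : K) :
    ∃ n : ℕ, n ≠ 0 ∧ ∃ o : 𝓞 K, (n : K) * x = o := by
  obtain ⟨y, hy, h⟩ := IsAlgebraic.exists_integral_multiple (R := ℤ)
    ((IsFractionRing.isAlgebraic_iff ℤ ℚ K).mpr (Algebra.IsAlgebraic.isAlgebraic x))
  refine ⟨y.natAbs, by simpa using hy, ?_⟩
  have hz : IsIntegral ℤ ((y.natAbs : K) * x) := by
    rcases Int.natAbs_eq y with h' | h'
    · rw [h'] at h; simpa using h
    · rw [h'] at h; simpa using h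
  exact ⟨⟨_, hz⟩, rfl⟩

noncomputable def auxLat {F : Type*} [Field F] [NumberField F] (I : Ideal (𝓞 F)) : Submodule ℤ F :=
  (I.restrictScalars ℤ).map (algebraMap (𝓞 F) F).toAddMonoidHom.toIntLinearMap

theorem auxLat_fg {F : Type*} [Field F] [NumberField F] (I : Ideal (𝓞 F)) : (auxLat I).FG := 
  Submodule.FG.map _ (IsNoetherian.noetherian _)

theorem mem_auxLat {F : Type*} [Field F] [NumberField F] (I : Ideal (𝓞 F)) (x : F) :
    x ∈ auxLat I ↔ ∃ m ∈ I, algebraMap (𝓞 F) F m = x := Iff.rfl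

theorem aux_field_den {K F : Type*} [Field K] [NumberField K] [Field F] [NumberField F]
    [Algebra K F] (ζ : F) (h : ∀ x : F, ∃ a b : K, x = algebraMap K F a + algebraMap K F b * ζ) :
    ∃ D : ℕ, D ≠ 0 ∧ ∀ o : 𝓞 F, ∃ r s : 𝓞 K,
      (D : F) * o = algebraMap K F r + algebraMap K F s * ζ := by
  classical
  have h1 : ∀ x : F, ∃ n : ℕ, n ≠ 0 ∧ ∃ r s : 𝓞 K,
      (n : F) * x = algebraMap K F r + algebraMap K F s * ζ := by
    intro x
    obtain ⟨a, b, rfl⟩ := h x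
    obtain ⟨n, hn, r, hr⟩ := aux_den a
    obtain ⟨m, hm, s, hs⟩ := aux_den b
    refine ⟨n * m, mul_ne_zero hn hm, m * r, n * s, ?_⟩
    push_cast
    simp only [map_mul, ← hr, ← hs, map_natCast]
    ring
  choose d hd0 hd using h1
  obtain ⟨s, hs⟩ := (Module.Finite.fg_top : (⊤ : Submodule ℤ (𝓞 F)).FG)
  refine ⟨∏ o ∈ s, d o, Finset.prod_ne_zero_iff.mpr fun _ _ => hd0 _, fun o => ?_⟩
  have ho : o ∈ Submodule.span ℤ (s : Set (𝓞 F)) := by rw [hs]; trivial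
  induction ho using Submodule.span_induction with
  | mem x hx =>
    obtain ⟨r, t, hrt⟩ := hd x
    obtain ⟨k, hk⟩ := Finset.dvd_prod_of_mem (fun o : 𝓞 F => d o) hx
    refine ⟨k * r, k * t, ?_⟩
    rw [hk]
    push_cast
    linear_combination k * hrt
  | zero => exact ⟨0, 0, by simp⟩
  | add x y _ _ hx hy =>
    obtain ⟨r, t, hrt⟩ := hx
    obtain ⟨r', t', hrt'⟩ := hy
    refine ⟨r + r', t + t', ?_⟩
    push_cast at *
    linear_combination hrt + hrt'
  | smul a x _ hx =>
    obtain ⟨r, t, hrt⟩ := hx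
    refine ⟨a * r, a * t, ?_⟩
    push_cast at *
    simp only [map_intCast, zsmul_eq_mul]
    linear_combination a * hrt

theorem aux_cancel {K : Type*} [Field K] {a b : K} (ha : a ≠ 0) (h : a * b = 0) : b = 0 :=
  (mul_eq_zero.mp h).resolve_left ha

theorem aux_cancel' {K : Type*} [Field K] {a b : K} (ha : a ≠ 0) (h : b * a = 0) : b = 0 :=
  (mul_eq_zero.mp h).resolve_right ha

theorem aux_det {K : Type*} [Field K] [NumberField K] {R : Subalgebra (𝓞 K) K}
    (g : SpecialLinearGroup (Fin 2) R) :
    (g.1 0 0 : K) * g.1 1 1 - (g.1 0 1 : K) * g.1 1 0 = 1 := by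
  have := g.2
  rw [det_fin_two] at this
  have := congrArg Subtype.val this
  push_cast at this
  exact this

theorem aux_field {K F : Type*} [Field K] [NumberField K] (R : Subalgebra (𝓞 K) K)
    (hU : Finite (Rˣ ⧸ (powMonoidHom 2 : Rˣ →* Rˣ).range))
    [Field F] [NumberField F] [Algebra K F] (t : K) (ζ : F)
    (hζ : ζ ^ 2 - algebraMap K F t * ζ + 1 = 0) (hz : ∀ x : K, ζ ≠ algebraMap K F x)
    (h : ∀ x : F, ∃ a b : K, x = algebraMap K F a + algebraMap K F b * ζ) :
    (ConjClasses.mk '' {g : SpecialLinearGroup (Fin 2) R |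
      (g.1 0 0 : K) + g.1 1 1 = t}).Finite := by
  obtain ⟨D, hD, hDo⟩ := aux_field_den ζ h
  obtain ⟨N, hN⟩ := aux_class F
  apply aux_lattice R hU (LinearMap.mulLeft K ζ) (fun i => (auxLat (N i)).toAddSubgroup)
    (fun i => (Submodule.fg_iff_addSubgroup_fg _).mp (auxLat_fg _)) D hD
  intro g hg
  have hdet := aux_det g
  set a : K := ((g.1 0 0 : R) : K) with ha
  set b : K := ((g.1 0 1 : R) : K) with hb
  set c : K := ((g.1 1 0 : R) : K) with hc
  set d : K := ((g.1 1 1 : R) : K) with hd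
  have hg : a + d = t := hg
  have hza : ζ - algebraMap K F a ≠ 0 := sub_ne_zero.mpr (hz a)
  have hzd : ζ - algebraMap K F d ≠ 0 := sub_ne_zero.mpr (hz d)
  have hdet' := congrArg (algebraMap K F) hdet
  simp only [map_sub, map_mul, map_one] at hdet'
  rw [← hg, map_add] at hζ
  have hc0 : c ≠ 0 := by
    intro h0
    have : (ζ - algebraMap K F a) * (ζ - algebraMap K F d) = 0 := by
      rw [h0, map_zero] at hdet'
      linear_combination hζ + hdet'
    exact (mul_ne_zero hza hzd) this
  obtain ⟨α, hα, i, ⟨m, hm, hpm⟩, ⟨m', hm', hqm⟩, hx⟩ :=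
    hN (algebraMap K F c) (ζ - algebraMap K F a) (fun h => hza h.2)
  refine ⟨i, α * algebraMap K F c, α * (ζ - algebraMap K F a), ?_, ?_, ?_, ⟨m, hm, hpm.symm⟩,
    ⟨m', hm', hqm.symm⟩, ?_⟩
  · intro x y hxy
    simp only [Algebra.smul_def] at hxy
    have h1 : algebraMap K F x * algebraMap K F c + algebraMap K F y * (ζ - algebraMap K F a) = 0 := by
      apply aux_cancel hα
      linear_combination hxy
    have hy : y = 0 := by
      by_contra hy
      have hy' : algebraMap K F y ≠ 0 := by simpa using hy
      apply hz (a - x * c / y)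
      simp only [map_sub, map_mul, map_div₀]
      field_simp
      linear_combination h1
    subst hy
    simp only [map_zero, zero_mul, add_zero, mul_eq_zero, map_eq_zero] at h1
    exact ⟨h1.resolve_right hc0, rfl⟩
  · simp only [Algebra.smul_def, LinearMap.mulLeft_apply]
    ring
  · simp only [Algebra.smul_def, LinearMap.mulLeft_apply]
    linear_combination α * hζ + α * hdet'
  · rintro _ ⟨x, hxi, rfl⟩
    obtain ⟨o, o', hoo⟩ := hx x hxi
    obtain ⟨r, s, hrs⟩ := hDo o
    obtain ⟨r', s', hrs'⟩ := hDo o'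
    refine ⟨algebraMap (𝓞 K) R r + algebraMap (𝓞 K) R s * g.1 0 0 + algebraMap (𝓞 K) R s' * g.1 0 1,
      algebraMap (𝓞 K) R s * g.1 1 0 + algebraMap (𝓞 K) R r' + algebraMap (𝓞 K) R s' * g.1 1 1, ?_⟩
    change D • (algebraMap (𝓞 F) F x) = _
    push_cast
    simp only [Algebra.smul_def, ← ha, ← hb, ← hc, ← hd, map_add, map_mul, nsmul_eq_mul, hoo]
    change _ = (algebraMap K F r + algebraMap K F s * algebraMap K F a + algebraMap K F s' * algebraMap K F b) * _ + (algebraMap K F s * algebraMap K F c + algebraMap K F r' + algebraMap K F s' * algebraMap K F d) * _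
    linear_combination (α * algebraMap K F c) * hrs + (α * (ζ - algebraMap K F a)) * hrs' +
      algebraMap K F s' * (α * hζ + α * hdet')

theorem aux_eig {K : Type*} [Field K] (a b c d z : K) (hdet : a * d - b * c = 1)
    (hz : z ^ 2 - (a + d) * z + 1 = 0) :
    ∃ p q : K, ¬ (p = 0 ∧ q = 0) ∧ p * a + q * c = z * p ∧ p * b + q * d = z * q := by
  by_cases h : c = 0 ∧ z - a = 0
  · by_cases h' : z - d = 0 ∧ b = 0
    · refine ⟨1, 0, by simp, ?_, ?_⟩
      · linear_combination -h.2
      · linear_combination h'.2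
    · exact ⟨z - d, b, h', by linear_combination -hz - hdet, by ring⟩
  · exact ⟨c, z - a, h, by ring, by linear_combination -hz - hdet⟩

theorem aux_split {K : Type*} [Field K] [NumberField K] (R : Subalgebra (𝓞 K) K)
    (hU : Finite (Rˣ ⧸ (powMonoidHom 2 : Rˣ →* Rˣ).range)) (t ζ : K)
    (hζ : ζ ^ 2 - t * ζ + 1 = 0) (ht : t ^ 2 ≠ 4) :
    (ConjClasses.mk '' {g : SpecialLinearGroup (Fin 2) R |
      (g.1 0 0 : K) + g.1 1 1 = t}).Finite := by
  obtain ⟨η, hη⟩ : ∃ η, η = t - ζ := ⟨_, rfl⟩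
  have hηr : η ^ 2 - t * η + 1 = 0 := by rw [hη]; linear_combination hζ
  have hδ : ζ - η ≠ 0 := by
    intro h0
    apply ht
    rw [hη] at h0
    linear_combination (2 * ζ - t) * h0 - 4 * hζ
  obtain ⟨n0, hn0, o0, (ho0 : _ = algebraMap (𝓞 K) K o0)⟩ := aux_den (1 / (ζ - η))
  obtain ⟨n1, hn1, o1, (ho1 : _ = algebraMap (𝓞 K) K o1)⟩ := aux_den (η / (ζ - η))
  obtain ⟨n2, hn2, o2, (ho2 : _ = algebraMap (𝓞 K) K o2)⟩ := aux_den (ζ / (ζ - η))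
  obtain ⟨N, hN⟩ := aux_class K
  let ρ : K × K →ₗ[K] K × K := LinearMap.prodMap (LinearMap.mulLeft K ζ) (LinearMap.mulLeft K η)
  apply aux_lattice R hU ρ (ι := ClassGroup (𝓞 K) × ClassGroup (𝓞 K))
    (fun i => ((auxLat (N i.1)).prod (auxLat (N i.2))).toAddSubgroup)
    (fun i => (Submodule.fg_iff_addSubgroup_fg _).mp ((auxLat_fg _).prod (auxLat_fg _)))
    (n0 * n1 * n2) (by positivity)
  intro g hg
  have hdet := aux_det g
  set a : K := ((g.1 0 0 : R) : K) with ha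
  set b : K := ((g.1 0 1 : R) : K) with hb
  set c : K := ((g.1 1 0 : R) : K) with hc
  set d : K := ((g.1 1 1 : R) : K) with hd
  have hg : a + d = t := hg
  rw [← hg] at hζ hηr
  obtain ⟨p1, q1, hpq1, h11, h12⟩ := aux_eig a b c d ζ hdet hζ
  obtain ⟨p2, q2, hpq2, h21, h22⟩ := aux_eig a b c d η hdet hηr
  have hΔ : p1 * q2 - p2 * q1 ≠ 0 := by
    intro hΔ
    have e1 : p1 * p2 = 0 := by
      apply aux_cancel hδ
      linear_combination p1 * h21 - p2 * h11 - c * hΔ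
    have e2 : q1 * q2 = 0 := by
      apply aux_cancel hδ
      linear_combination q1 * h22 - q2 * h12 + b * hΔ
    rcases mul_eq_zero.mp e1 with h | h <;> rcases mul_eq_zero.mp e2 with h' | h'
    · exact hpq1 ⟨h, h'⟩
    · subst h; subst h'
      have : p2 * q1 = 0 := by linear_combination -hΔ
      simp_all
    · subst h; subst h'
      have : p1 * q2 = 0 := by linear_combination hΔ
      simp_all
    · exact hpq2 ⟨h, h'⟩
  obtain ⟨α, hα, i, ⟨m, hm, hpm⟩, ⟨m', hm', hqm⟩, hx⟩ := hN p1 q1 hpq1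
  obtain ⟨β, hβ, j, ⟨k, hk, hpk⟩, ⟨k', hk', hqk⟩, hy⟩ := hN p2 q2 hpq2
  refine ⟨(i, j), (α * p1, β * p2), (α * q1, β * q2), ?_, ?_, ?_,
    ⟨⟨m, hm, hpm.symm⟩, ⟨k, hk, hpk.symm⟩⟩, ⟨⟨m', hm', hqm.symm⟩, ⟨k', hk', hqk.symm⟩⟩, ?_⟩
  · intro x y hxy
    have h1 := congrArg Prod.fst hxy
    have h2 := congrArg Prod.snd hxy
    simp at h1 h2
    replace h1 : x * p1 + y * q1 = 0 := by
      apply aux_cancel hα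
      linear_combination h1
    replace h2 : x * p2 + y * q2 = 0 := by
      apply aux_cancel hβ
      linear_combination h2
    constructor
    · apply aux_cancel' hΔ
      linear_combination q2 * h1 - q1 * h2
    · apply aux_cancel' hΔ
      linear_combination p1 * h2 - p2 * h1
  · ext
    · simp [ρ]; linear_combination -α * h11
    · simp [ρ]; linear_combination -β * h21
  · ext
    · simp [ρ]; linear_combination -α * h12
    · simp [ρ]; linear_combination -β * h22
  · rintro ⟨x, y⟩ ⟨⟨X, hX, hXx⟩, ⟨Y, hY, hYy⟩⟩
    obtain ⟨o, o', hoo⟩ := hx X hX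
    obtain ⟨u, u', huu⟩ := hy Y hY
    change algebraMap (𝓞 K) K X = x at hXx
    change algebraMap (𝓞 K) K Y = y at hYy
    rw [hXx] at hoo
    rw [hYy] at huu
    let A := algebraMap (𝓞 K) R
    obtain ⟨y0, hy0⟩ : ∃ y0 : 𝓞 K, algebraMap (𝓞 K) K y0 = n0 * n1 * n2 / (ζ - η) :=
      ⟨n1 * n2 * o0, by simp only [map_mul, map_natCast]; rw [← ho0]; ring⟩
    obtain ⟨y1, hy1⟩ : ∃ y1 : 𝓞 K, algebraMap (𝓞 K) K y1 = n0 * n1 * n2 * η / (ζ - η) :=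
      ⟨n0 * n2 * o1, by simp only [map_mul, map_natCast]; rw [← ho1]; ring⟩
    obtain ⟨y2, hy2⟩ : ∃ y2 : 𝓞 K, algebraMap (𝓞 K) K y2 = n0 * n1 * n2 * ζ / (ζ - η) :=
      ⟨n0 * n1 * o2, by simp only [map_mul, map_natCast]; rw [← ho2]; ring⟩
    refine ⟨A y0 * (g.1 0 0 * A (o - u) + g.1 0 1 * A (o' - u')) - A (y1 * o) + A (y2 * u),
      A y0 * (g.1 1 0 * A (o - u) + g.1 1 1 * A (o' - u')) - A (y1 * o') + A (y2 * u'), ?_⟩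
    have hA : ∀ z, (A z : K) = algebraMap (𝓞 K) K z := fun z => rfl
    push_cast
    simp only [hA, ← ha, ← hb, ← hc, ← hd, map_sub, map_mul, Subalgebra.coe_sub, Subalgebra.coe_mul]
    have r1 : algebraMap (𝓞 K) K y0 * (ζ - η) = n0 * n1 * n2 := by rw [hy0]; field_simp
    have r2 : algebraMap (𝓞 K) K y1 = algebraMap (𝓞 K) K y0 * η := by rw [hy1, hy0]; ring
    have r3 : algebraMap (𝓞 K) K y2 = algebraMap (𝓞 K) K y0 * ζ := by rw [hy2, hy0]; ring
    rw [r2, r3]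
    ext
    · simp
      rw [hoo, ← r1]
      linear_combination -α * y0 * ((o - u : K) * h11 + (o' - u' : K) * h12)
    · simp
      rw [huu, ← r1]
      linear_combination -β * y0 * ((o - u : K) * h21 + (o' - u' : K) * h22)

theorem aux_fixed_trace {K : Type*} [Field K] [NumberField K] (R : Subalgebra (𝓞 K) K)
    (hU : Finite (Rˣ ⧸ (powMonoidHom 2 : Rˣ →* Rˣ).range)) (t : K) (ht : t ^ 2 ≠ 4) :
    (ConjClasses.mk '' {g : SpecialLinearGroup (Fin 2) R |
      (g.1 0 0 : K) + g.1 1 1 = t}).Finite := by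
  by_cases hroot : ∃ ζ : K, ζ ^ 2 - t * ζ + 1 = 0
  · obtain ⟨ζ, hζ⟩ := hroot
    exact aux_split R hU t ζ hζ ht
  · let f : Polynomial K := Polynomial.X ^ 2 + (Polynomial.C (-t) * Polynomial.X + Polynomial.C 1)
    have hdeg : (Polynomial.C (-t) * Polynomial.X + Polynomial.C 1).degree < ((2 : ℕ) : WithBot ℕ) :=
      lt_of_le_of_lt Polynomial.degree_linear_le (by exact_mod_cast Nat.one_lt_two)
    have hmon : f.Monic := Polynomial.monic_X_pow_add hdeg
    have hnat : f.natDegree = 2 := by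
      have : f.degree = (2 : ℕ) := by
        simp only [f]
        rw [Polynomial.degree_add_eq_left_of_degree_lt] <;> rw [Polynomial.degree_X_pow]
        exact hdeg
      exact Polynomial.natDegree_eq_of_degree_eq_some this
    have hirr : Irreducible f := by
      rw [Polynomial.irreducible_iff_roots_eq_zero_of_degree_le_three (by rw [hnat]) (by rw [hnat]; norm_num)]
      rw [Multiset.eq_zero_iff_forall_notMem]
      intro x hx
      rw [Polynomial.mem_roots hmon.ne_zero] at hx
      apply hroot
      refine ⟨x, ?_⟩
      simp [f, Polynomial.IsRoot] at hx
      linear_combination hx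
    have : Fact (Irreducible f) := ⟨hirr⟩
    have : Module.Finite K (AdjoinRoot f) := (AdjoinRoot.powerBasis hmon.ne_zero).finite
    have : NumberField (AdjoinRoot f) := NumberField.of_module_finite K _
    have hζ : (AdjoinRoot.root f) ^ 2 - algebraMap K (AdjoinRoot f) t * AdjoinRoot.root f + 1 = 0 := by
      have := AdjoinRoot.eval₂_root f
      simp [f] at this
      rw [AdjoinRoot.algebraMap_eq]
      linear_combination this
    refine aux_field R hU t (AdjoinRoot.root f) hζ ?_ ?_
    · intro x hx
      apply hroot
      refine ⟨x, (algebraMap K (AdjoinRoot f)).injective ?_⟩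
      rw [hx] at hζ
      simpa using hζ
    · intro x
      obtain ⟨P, rfl⟩ := AdjoinRoot.mk_surjective x
      have h1 : AdjoinRoot.mk f P = AdjoinRoot.mk f (P %ₘ f) := by
        conv_lhs => rw [← Polynomial.modByMonic_add_div P f]
        simp
      have h2 : (P %ₘ f).natDegree ≤ 1 := by
        have := Polynomial.natDegree_modByMonic_lt P hmon (by intro h; rw [h] at hnat; simp at hnat)
        omega
      rw [h1, Polynomial.eq_X_add_C_of_natDegree_le_one h2]
      refine ⟨(P %ₘ f).coeff 0, (P %ₘ f).coeff 1, ?_⟩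
      simp [AdjoinRoot.algebraMap_eq]
      ring

theorem aux_traces {K : Type*} [Field K] [NumberField K] (R : Subalgebra (𝓞 K) K) (n : ℕ)
    (hn : 0 < n) :
    {t : K | ∃ g : SpecialLinearGroup (Fin 2) R, g ^ n = 1 ∧ (g.1 0 0 : K) + g.1 1 1 = t}.Finite := by
  classical
  let L := AlgebraicClosure K
  let ι := algebraMap K L
  have hfin : {x : L | x ^ n = 1}.Finite := by
    apply Set.Finite.subset (Polynomial.nthRoots n (1 : L)).toFinset.finite_toSet
    intro x hx
    have hx' : x ^ n = 1 := hx
    simpa [Polynomial.mem_nthRoots hn] using hx'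
  apply Set.Finite.subset ((hfin.image (fun x => x + x⁻¹)).preimage ι.injective.injOn)
  rintro t ⟨g, hg, ht⟩
  have hdet := aux_det g
  set a : K := ((g.1 0 0 : R) : K) with ha
  set b : K := ((g.1 0 1 : R) : K) with hb
  set c : K := ((g.1 1 0 : R) : K) with hc
  set d : K := ((g.1 1 1 : R) : K) with hd
  obtain ⟨s, hs⟩ := IsAlgClosed.exists_pow_nat_eq (ι (t ^ 2 - 4)) (n := 2) (by norm_num)
  obtain ⟨x, hx⟩ : ∃ x : L, x = (ι t + s) / 2 := ⟨_, rfl⟩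
  have hx2 : x ^ 2 - ι t * x + 1 = 0 := by
    rw [map_sub, map_pow] at hs
    have : ι 4 = 4 := map_ofNat ι 4
    rw [this] at hs
    rw [hx]
    linear_combination hs / 4
  obtain ⟨p, q, hpq, h1, h2⟩ := aux_eig (ι a) (ι b) (ι c) (ι d) x
    (by rw [← map_mul, ← map_mul, ← map_sub, hdet, map_one]) (by rw [← map_add, ht]; exact hx2)
  have hpow : ∀ k : ℕ, p * ι ((g ^ k).1 0 0 : R) + q * ι ((g ^ k).1 1 0 : R) = x ^ k * p ∧
      p * ι ((g ^ k).1 0 1 : R) + q * ι ((g ^ k).1 1 1 : R) = x ^ k * q := by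
    intro k
    induction k with
    | zero => simp
    | succ k ih =>
      have hm : ∀ i j, (((g ^ (k + 1)).1 i j : R) : K) =
          (((g ^ k).1 i 0 : R) : K) * (g.1 0 j : R) + (((g ^ k).1 i 1 : R) : K) * (g.1 1 j : R) := by
        intro i j
        have : (g ^ (k + 1)).1 = (g ^ k).1 * g.1 := by rw [pow_succ]; rfl
        rw [this, Matrix.mul_apply, Fin.sum_univ_two]
        push_cast
        rfl
      simp only [hm, ← ha, ← hb, ← hc, ← hd, map_add, map_mul]
      constructor
      · linear_combination ι a * ih.1 + ι c * ih.2 + x ^ k * h1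
      · linear_combination ι b * ih.1 + ι d * ih.2 + x ^ k * h2
  have hn' := hpow n
  rw [hg] at hn'
  simp at hn'
  have hx1 : x ^ n = 1 := by
    by_cases hp : p = 0
    · have hq : q ≠ 0 := fun h => hpq ⟨hp, h⟩
      exact (mul_eq_right₀ hq).mp hn'.2.symm
    · exact (mul_eq_right₀ hp).mp hn'.1.symm
  refine ⟨x, hx1, ?_⟩
  have hx0 : x ≠ 0 := by rintro rfl; rw [zero_pow hn.ne'] at hx1; exact zero_ne_one hx1
  change x + x⁻¹ = ι t
  have hxx : x * x⁻¹ = 1 := mul_inv_cancel₀ hx0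
  apply mul_left_cancel₀ hx0
  linear_combination hx2 + hxx

theorem aux_usq {A : Type*} [CommRing A] (ε : A) (M : Matrix (Fin 2) (Fin 2) A) (hε : ε ^ 2 = 1)
    (ht : M 0 0 + M 1 1 = ε + ε) (hdet : M 0 0 * M 1 1 - M 0 1 * M 1 0 = 1) :
    (ε • M) * (ε • M) = ε • M + ε • M - 1 := by
  ext i j : 2
  fin_cases i <;> fin_cases j <;>
    simp only [Matrix.mul_apply, Fin.sum_univ_two, Matrix.smul_apply, Matrix.sub_apply,
      Matrix.add_apply, smul_eq_mul, Fin.zero_eta, Fin.mk_one, Fin.isValue, Matrix.one_apply_eq,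
      Matrix.one_apply_ne, ne_eq, zero_ne_one, one_ne_zero, not_false_eq_true]
  · linear_combination (M 0 0 * M 0 0 + M 0 1 * M 1 0) * hε + M 0 0 * ht - hdet
  · linear_combination (M 0 0 * M 0 1 + M 0 1 * M 1 1) * hε + M 0 1 * ht
  · linear_combination (M 1 0 * M 0 0 + M 1 1 * M 1 0) * hε + M 1 0 * ht
  · linear_combination (M 1 0 * M 0 1 + M 1 1 * M 1 1) * hε + M 1 1 * ht - hdet

theorem aux_parabolic {K : Type*} [Field K] [NumberField K] (R : Subalgebra (𝓞 K) K) (n : ℕ)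
    (hn : 0 < n) (ε : R) (hε : ε ^ 2 = 1) (g : SpecialLinearGroup (Fin 2) R) (hg : g ^ n = 1)
    (ht : g.1 0 0 + g.1 1 1 = ε + ε) : g.1 = ε • (1 : Matrix (Fin 2) (Fin 2) R) := by
  have hdet : g.1 0 0 * g.1 1 1 - g.1 0 1 * g.1 1 0 = 1 := by rw [← det_fin_two]; exact g.2
  let u : Matrix (Fin 2) (Fin 2) R := ε • g.1
  have hu : u * u = u + u - 1 := aux_usq ε g.1 hε ht hdet
  have hk : ∀ k : ℕ, u ^ k = 1 + k • (u - 1) := by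
    intro k
    induction k with
    | zero => simp
    | succ k ih =>
      rw [pow_succ, ih, add_mul, smul_mul_assoc, sub_mul, one_mul, hu]
      module
  have h2n : u ^ (2 * n) = 1 := by
    have hgn : g.1 ^ n = 1 := by
      have := congrArg Subtype.val hg
      simpa using this
    simp only [u, smul_pow]
    rw [pow_mul, hε, one_pow, one_smul, mul_comm, pow_mul, hgn, one_pow]
  rw [hk] at h2n
  have h3 : (2 * n) • (u - 1) = 0 := by simpa using h2n
  have h4 : u = 1 := by
    rw [← sub_eq_zero]
    ext i j
    have := congrFun (congrFun h3 i) j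
    have hn0 : (n : K) ≠ 0 := by exact_mod_cast hn.ne'
    have h5 := congrArg Subtype.val this
    rw [Matrix.smul_apply] at h5
    rw [nsmul_eq_mul] at h5
    push_cast at h5
    simpa [hn0] using h5
  calc g.1 = (ε ^ 2) • g.1 := by rw [hε, one_smul]
    _ = ε • u := by rw [pow_two, mul_smul]
    _ = _ := by rw [h4]

end AuxMat

/-- For a number field `K`, a finite set `S` of finite places of `K`, and a
prime `ℓ`, the set of conjugacy classes of elements of order exactly `ℓ` in `SL₂(O_{K,S})`
is finite. -/
theorem finite_conjClasses_order_ell (K : Type*) [Field K] [NumberField K]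
    (S : Set (HeightOneSpectrum (𝓞 K))) (hS : S.Finite)
    (ℓ : ℕ) (hℓ : ℓ.Prime) :
    {c : ConjClasses (Matrix.SpecialLinearGroup (Fin 2) (S.integer K)) |
      ∃ g, c = ConjClasses.mk g ∧ orderOf g = ℓ}.Finite := by
  have hU := aux_unit_sq K S hS
  let T := {t : K | ∃ g : Matrix.SpecialLinearGroup (Fin 2) (S.integer K),
    g ^ ℓ = 1 ∧ (g.1 0 0 : K) + g.1 1 1 = t}
  have hT : T.Finite := aux_traces (S.integer K) ℓ hℓ.pos
  have hT' : (T ∩ {t | t ^ 2 ≠ 4}).Finite := hT.inter_of_left _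
  have hbig := hT'.biUnion (t := fun t =>
    ConjClasses.mk '' {g : Matrix.SpecialLinearGroup (Fin 2) (S.integer K) |
      (g.1 0 0 : K) + g.1 1 1 = t}) (fun t ht => aux_fixed_trace (S.integer K) hU t ht.2)
  apply ((Set.toFinite ({ConjClasses.mk 1, ConjClasses.mk (-1)} :
    Set (ConjClasses (Matrix.SpecialLinearGroup (Fin 2) (S.integer K))))).union hbig).subset
  rintro _ ⟨g, rfl, hg⟩
  have hgn : g ^ ℓ = 1 := by rw [← hg]; exact pow_orderOf_eq_one g
  by_cases ht : ((g.1 0 0 : K) + g.1 1 1) ^ 2 = 4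
  · left
    have h0 : ((g.1 0 0 : K) + g.1 1 1 - 2) * ((g.1 0 0 : K) + g.1 1 1 + 2) = 0 := by
      linear_combination ht
    rcases mul_eq_zero.mp h0 with h | h
    · left
      congr 1
      apply Subtype.ext
      rw [aux_parabolic (S.integer K) ℓ hℓ.pos 1 (by ring) g hgn ?_]
      · simp
      · apply Subtype.ext
        push_cast
        linear_combination h
    · right
      rw [Set.mem_singleton_iff]
      congr 1
      apply Subtype.ext
      rw [aux_parabolic (S.integer K) ℓ hℓ.pos (-1) (by ring) g hgn ?_]
      · simp
      · apply Subtype.ext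
        push_cast
        linear_combination h
  · right
    simp only [Set.mem_iUnion]
    exact ⟨_, ⟨⟨g, hgn, rfl⟩, ht⟩, g, rfl, rfl⟩
end

section
/- Let ℓ be an odd prime, K a number field containing a primitive ℓ-th root of unity, and S a finite set of finite places of K such that ℓ is invertible in O = O_{K,S}. Then the number of conjugacy classes of subgroups of order ℓ in SL₂(O) equals the number of orbits of the ideal class group Cl(O) under the inversion involution c ↦ c⁻¹. -/
open IsDedekindDomain NumberField

open scoped Pointwise

/-- The setoid on a group identifying each element with its inverse (the orbits of the
inversion involution `c ↦ c⁻¹`). -/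
def invSetoid (G : Type*) [Group G] : Setoid G where
  r a b := b = a ∨ b = a⁻¹
  iseqv := by
    constructor
    · exact fun a => Or.inl rfl
    · rintro a b (rfl | rfl) <;> simp
    · rintro a b c (rfl | rfl) (rfl | rfl) <;> simp


section SInt
variable {K : Type*} [Field K] [NumberField K] (S : Set (HeightOneSpectrum (𝓞 K)))

def sMon : Submonoid (𝓞 K) where
  carrier := {s | s ≠ 0 ∧ ∀ v : HeightOneSpectrum (𝓞 K), v ∉ S → v.intValuation s = 1}
  one_mem' := ⟨one_ne_zero, fun v _ => map_one _⟩
  mul_mem' := fun {a b} ha hb => ⟨mul_ne_zero ha.1 hb.1, fun v hv => by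
    rw [map_mul, ha.2 v hv, hb.2 v hv, one_mul]⟩

theorem exists_pi (v : HeightOneSpectrum (𝓞 K)) (hv : v ∈ S) :
    ∃ s ∈ sMon S, v.intValuation s < 1 := by
  obtain ⟨h, hpos, hp⟩ : ∃ h, 0 < h ∧ (v.asIdeal ^ h).IsPrincipal := by
    refine ⟨Fintype.card (ClassGroup (𝓞 K)), Fintype.card_pos, ?_⟩
    have := pow_card_eq_one (x := ClassGroup.mk0 (⟨v.asIdeal, mem_nonZeroDivisors_iff_ne_zero.2 v.ne_bot⟩ : nonZeroDivisors (Ideal (𝓞 K))))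
    rw [← map_pow, ClassGroup.mk0_eq_one_iff] at this
    simpa using this
  obtain ⟨s, hs⟩ := hp
  have hs : v.asIdeal ^ h = Ideal.span {s} := hs
  have hs0 : s ≠ 0 := by
    rintro rfl
    have : v.asIdeal ^ h = 0 := by simpa using hs
    exact v.ne_bot (pow_eq_zero_iff (hpos.ne') |>.1 this)
  refine ⟨s, ⟨hs0, fun w hw => ?_⟩, ?_⟩
  · by_contra hne
    have hlt := lt_of_le_of_ne (w.intValuation_le_one s) hne
    rw [HeightOneSpectrum.intValuation_lt_one_iff_mem] at hlt
    have h1 : v.asIdeal ^ h ≤ w.asIdeal := by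
      rw [hs, Ideal.span_singleton_le_iff_mem]; exact hlt
    have h2 : v.asIdeal ≤ w.asIdeal := w.isPrime.le_of_pow_le h1
    have h3 : v.asIdeal = w.asIdeal := v.isMaximal.eq_of_le w.isPrime.ne_top h2
    have : v = w := HeightOneSpectrum.ext h3
    exact hw (this ▸ hv)
  · rw [HeightOneSpectrum.intValuation_lt_one_iff_mem]
    apply Ideal.pow_le_self hpos.ne'
    rw [hs]; exact Ideal.mem_span_singleton_self s

theorem exists_s (hS : S.Finite) :
    ∃ s ∈ sMon S, ∀ v ∈ S, v.intValuation s < 1 := by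
  classical
  choose! f hf hf1 using exists_pi S
  refine ⟨∏ v ∈ hS.toFinset, f v, prod_mem fun v hv => hf v (by simpa using hv), fun v hv => ?_⟩
  rw [← Finset.mul_prod_erase _ _ (hS.mem_toFinset.2 hv), map_mul]
  exact mul_lt_one_of_lt_of_le (hf1 v hv) (v.intValuation_le_one _)

theorem sInteger_isLocalization (hS : S.Finite) : IsLocalization (sMon S) (S.integer K) where
  map_units := by
    rintro ⟨s, hs0, hs⟩
    have h0 : (algebraMap (𝓞 K) K s) ≠ 0 := by simpa using hs0
    refine IsUnit.of_mul_eq_one ⟨(algebraMap (𝓞 K) K s)⁻¹, fun v hv => ?_⟩ ?_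
    · rw [map_inv₀, HeightOneSpectrum.valuation_of_algebraMap, hs v hv, inv_one]
    · apply Subtype.ext
      exact mul_inv_cancel₀ h0
  surj := by
    rintro ⟨x, hx⟩
    obtain ⟨s, hs, hs1⟩ := exists_s S hS
    have key : ∀ v : HeightOneSpectrum (𝓞 K), ∃ n : ℕ, v ∈ S → v.intValuation s ^ n * v.valuation K x ≤ 1 := by
      intro v
      by_cases hv : v ∈ S
      · by_cases h0 : v.valuation K x = 0
        · exact ⟨0, fun _ => by simp [h0]⟩
        · obtain ⟨n, hn⟩ := exists_pow_lt₀ (hs1 v hv) (Units.mk0 _ (inv_ne_zero h0))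
          refine ⟨n, fun _ => ?_⟩
          rw [Units.val_mk0] at hn
          calc _ ≤ (v.valuation K x)⁻¹ * v.valuation K x := mul_le_mul_left hn.le _
            _ = 1 := inv_mul_cancel₀ h0
      · exact ⟨0, fun h => absurd h hv⟩
    choose n hn using key
    let N := hS.toFinset.sup n
    have : ∀ v : HeightOneSpectrum (𝓞 K), v.valuation K (algebraMap (𝓞 K) K (s ^ N) * x) ≤ 1 := by
      intro v
      rw [map_mul, HeightOneSpectrum.valuation_of_algebraMap, map_pow]
      by_cases hv : v ∈ S
      · refine le_trans (mul_le_mul_left ?_ _) (hn v hv)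
        exact pow_le_pow_right_of_le_one' (v.intValuation_le_one s)
          (Finset.le_sup (f := n) (hS.mem_toFinset.2 hv))
      · rw [hs.2 v hv, one_pow, one_mul]; exact hx v hv
    obtain ⟨a, ha⟩ := HeightOneSpectrum.mem_integers_of_valuation_le_one K _ this
    refine ⟨(a, ⟨s ^ N, pow_mem hs N⟩), Subtype.ext ?_⟩
    change x * algebraMap (𝓞 K) K (s ^ N) = algebraMap (𝓞 K) K a
    rw [ha, mul_comm]
  exists_of_eq := by
    intro x y h
    refine ⟨1, ?_⟩
    have : algebraMap (𝓞 K) K x = algebraMap (𝓞 K) K y := congrArg (fun z : S.integer K => (z : K)) h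
    rw [FaithfulSMul.algebraMap_injective _ _ this]

theorem sInteger_isDedekindDomain (hS : S.Finite) : IsDedekindDomain (S.integer K) := by
  have := sInteger_isLocalization S hS
  exact IsLocalization.isDedekindDomain (𝓞 K) (M := sMon S)
    (fun s hs => mem_nonZeroDivisors_iff_ne_zero.2 hs.1) _
end SInt

section Core
open Matrix FractionalIdeal
open scoped nonZeroDivisors

set_option linter.unusedSectionVars false

variable (R : Type*) [CommRing R] [IsDomain R]

/-- Rank one idempotents. -/
@[ext] structure Idem2 where
  /-- the matrix -/
  m : Matrix (Fin 2) (Fin 2) R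
  tr : m 0 0 + m 1 1 = 1
  dt : m 0 0 * m 1 1 = m 0 1 * m 1 0

variable {R}

/-- The matrix of an element of `SL₂`. -/
def toM : SpecialLinearGroup (Fin 2) R →* Matrix (Fin 2) (Fin 2) R where
  toFun γ := γ.1
  map_one' := rfl
  map_mul' _ _ := rfl

theorem det_toM (γ : SpecialLinearGroup (Fin 2) R) : (toM γ).det = 1 := γ.2

theorem SL_ext {A B : SpecialLinearGroup (Fin 2) R}
    (h : toM A = toM B) : A = B := Subtype.ext h

theorem SL_mul_inv (γ : SpecialLinearGroup (Fin 2) R) :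
    toM γ * toM γ⁻¹ = 1 := by
  rw [← map_mul, mul_inv_cancel, map_one]

theorem SL_inv_mul (γ : SpecialLinearGroup (Fin 2) R) :
    toM γ⁻¹ * toM γ = 1 := by
  rw [← map_mul, inv_mul_cancel, map_one]

namespace Idem2

theorem mul_self (e : Idem2 R) : e.m * e.m = e.m := by
  obtain ⟨e, h1, h2⟩ := e
  ext i j
  fin_cases i <;> fin_cases j <;> simp [Matrix.mul_apply, Fin.sum_univ_two]
  · linear_combination e 0 0 * h1 - h2
  · linear_combination e 0 1 * h1
  · linear_combination e 1 0 * h1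
  · linear_combination e 1 1 * h1 - h2

/-- The complementary idempotent. -/
def compl (e : Idem2 R) : Idem2 R where
  m := 1 - e.m
  tr := by
    have h1 := e.tr
    simp; linear_combination -h1
  dt := by
    have h1 := e.tr
    have h2 := e.dt
    simp; linear_combination h2 - h1

theorem conj_aux (γ : SpecialLinearGroup (Fin 2) R) (e : Idem2 R) (A : Matrix (Fin 2) (Fin 2) R)
    (hA : A = toM γ * e.m * toM γ⁻¹) :
    A 0 0 + A 1 1 = 1 ∧ A 0 0 * A 1 1 = A 0 1 * A 1 0 := by
  have ht : A.trace = 1 := by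
    rw [hA, Matrix.trace_mul_comm, ← Matrix.mul_assoc, SL_inv_mul, Matrix.one_mul, Matrix.trace_fin_two]
    exact e.tr
  have hd : A.det = 0 := by
    rw [hA, Matrix.det_mul, Matrix.det_mul, Matrix.det_fin_two e.m, e.dt, sub_self]
    ring
  rw [Matrix.trace_fin_two] at ht
  rw [Matrix.det_fin_two] at hd
  exact ⟨ht, sub_eq_zero.1 hd⟩

/-- Conjugation. -/
def conj (γ : SpecialLinearGroup (Fin 2) R) (e : Idem2 R) : Idem2 R where
  m := toM γ * e.m * toM γ⁻¹
  tr := (conj_aux γ e _ rfl).1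
  dt := (conj_aux γ e _ rfl).2

/-- The torus of an idempotent, on elements. -/
def D₀ (e : Idem2 R) (u : Rˣ) : SpecialLinearGroup (Fin 2) R :=
  ⟨(u : R) • e.m + ((u⁻¹ : Rˣ) : R) • (1 - e.m), by
    obtain ⟨e, h1, h2⟩ := e
    have hu : (u : R) * ((u⁻¹ : Rˣ) : R) = 1 := u.mul_inv
    generalize ((u⁻¹ : Rˣ) : R) = w at *
    rw [Matrix.det_fin_two]
    simp
    linear_combination hu + (u - w)^2 * h2 + (u - w) * w * h1⟩

theorem coe_D₀ (e : Idem2 R) (u : Rˣ) :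
    toM (e.D₀ u) = (u : R) • e.m + ((u⁻¹ : Rˣ) : R) • (1 - e.m) := rfl

/-- The torus of an idempotent. -/
def D (e : Idem2 R) : Rˣ →* SpecialLinearGroup (Fin 2) R where
  toFun := e.D₀
  map_one' := by
    apply SL_ext
    simp [coe_D₀]
  map_mul' u v := by
    apply SL_ext
    rw [map_mul]
    have := e.mul_self
    simp only [coe_D₀, mul_inv, Units.val_mul]
    simp only [Matrix.add_mul, Matrix.mul_add, Matrix.smul_mul, Matrix.mul_smul, Matrix.mul_sub, Matrix.sub_mul,
      Matrix.one_mul, Matrix.mul_one, this, sub_self, smul_zero]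
    ext i j
    simp
    ring

theorem coe_D (e : Idem2 R) (u : Rˣ) :
    toM (e.D u) = (u : R) • e.m + ((u⁻¹ : Rˣ) : R) • (1 - e.m) := rfl

theorem D_conj (γ : SpecialLinearGroup (Fin 2) R) (e : Idem2 R) (u : Rˣ) :
    (conj γ e).D u = γ * e.D u * γ⁻¹ := by
  apply SL_ext
  rw [map_mul, map_mul, coe_D, coe_D]
  simp only [conj, Matrix.add_mul, Matrix.mul_add, Matrix.smul_mul, Matrix.mul_smul, Matrix.mul_sub,
    Matrix.sub_mul, Matrix.mul_one, SL_mul_inv]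

theorem D_compl (e : Idem2 R) (u : Rˣ) : e.compl.D u = e.D u⁻¹ := by
  apply SL_ext
  rw [coe_D, coe_D]
  simp [compl, add_comm]

theorem trace_D (e : Idem2 R) (u : Rˣ) :
    toM (e.D u) 0 0 + toM (e.D u) 1 1
      = u + ((u⁻¹ : Rˣ) : R) := by
  rw [coe_D]
  have := e.tr
  simp
  linear_combination (u - ((u⁻¹ : Rˣ) : R)) * this

theorem D_injective (e : Idem2 R) : Function.Injective e.D := by
  rw [injective_iff_map_eq_one]
  intro u hu
  have h := congrArg (fun g : SpecialLinearGroup (Fin 2) R => toM g * e.m) hu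
  simp only [coe_D, Matrix.add_mul, Matrix.smul_mul, Matrix.sub_mul, e.mul_self, Matrix.one_mul,
    sub_self, smul_zero, add_zero, map_one] at h
  have h0 := congrFun (congrFun h 0) 0
  have h1 := congrFun (congrFun h 1) 1
  simp only [Matrix.smul_apply, smul_eq_mul] at h0 h1
  have := e.tr
  apply Units.ext
  rw [Units.val_one]
  linear_combination h0 + h1 + (1 - (u : R)) * this

theorem eq_of_D_eq (e e' : Idem2 R) (u : Rˣ) (hu : (u : R) ≠ ((u⁻¹ : Rˣ) : R)) (h : e.D u = e'.D u) :
    e = e' := by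
  have := congrArg (fun g : SpecialLinearGroup (Fin 2) R => toM g) h
  simp only [coe_D] at this
  ext i j
  have h2 := congrFun (congrFun this i) j
  simp only [Matrix.add_apply, Matrix.smul_apply, Matrix.sub_apply, smul_eq_mul] at h2
  have : ((u : R) - ((u⁻¹ : Rˣ) : R)) * (e.m i j - e'.m i j) = 0 := by linear_combination h2
  rcases mul_eq_zero.1 this with h | h
  · exact absurd (sub_eq_zero.1 h) hu
  · exact sub_eq_zero.1 h

/-- The subgroup attached to an idempotent. -/
def H (u : Rˣ) (e : Idem2 R) : Subgroup (SpecialLinearGroup (Fin 2) R) := Subgroup.zpowers (e.D u)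

theorem card_H (u : Rˣ) (e : Idem2 R) : Nat.card (H u e) = orderOf u := by
  rw [H, Nat.card_zpowers, orderOf_injective _ e.D_injective]

theorem H_conj (u : Rˣ) (e : Idem2 R) (γ : SpecialLinearGroup (Fin 2) R) :
    H u (conj γ e) = ConjAct.toConjAct γ • H u e := by
  rw [H, H, D_conj]
  exact (MonoidHom.map_zpowers (MulDistribMulAction.toMonoidHom _ (ConjAct.toConjAct γ)) (e.D u)).symm

theorem H_compl (u : Rˣ) (e : Idem2 R) : H u e.compl = H u e := by
  rw [H, H, D_compl, map_inv, Subgroup.zpowers_inv]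

theorem H_eq_iff (u : Rˣ) (hu : u ≠ u⁻¹) (e e' : Idem2 R) :
    H u e = H u e' ↔ e = e' ∨ e = e'.compl := by
  have hu' : (u : R) ≠ ((u⁻¹ : Rˣ) : R) := fun h => hu (Units.ext h)
  constructor
  · intro h
    have h1 : e.D u ∈ H u e' := h ▸ Subgroup.mem_zpowers _
    obtain ⟨k, hk⟩ := Subgroup.mem_zpowers_iff.1 h1
    rw [← map_zpow] at hk
    generalize hw : u ^ k = w at hk
    have ht : (w : R) + ((w⁻¹ : Rˣ) : R) = u + ((u⁻¹ : Rˣ) : R) := by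
      rw [← trace_D e', ← trace_D e, hk]
    have h1 : (w : R) * ((w⁻¹ : Rˣ) : R) = 1 := w.mul_inv
    have h2 : (u : R) * ((u⁻¹ : Rˣ) : R) = 1 := u.mul_inv
    have : ((w : R) - u) * ((w : R) - ((u⁻¹ : Rˣ) : R)) = 0 := by
      linear_combination w * ht - h1 + h2
    rcases mul_eq_zero.1 this with h | h
    · have : w = u := Units.ext (sub_eq_zero.1 h)
      subst this
      exact Or.inl (eq_of_D_eq _ _ w hu' (by rw [hk]))
    · have : w = u⁻¹ := Units.ext (sub_eq_zero.1 h)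
      rw [this, ← D_compl] at hk
      exact Or.inr (eq_of_D_eq _ _ u hu' hk.symm)
  · rintro (rfl | rfl)
    · rfl
    · exact H_compl u e'

/-- Every subgroup of order `ℓ` comes from an idempotent. -/
theorem exists_H (ℓ : ℕ) (hℓ : ℓ.Prime) (hodd : Odd ℓ) (hinv : IsUnit (ℓ : R)) (u : Rˣ)
    (hu : IsPrimitiveRoot u ℓ) (G : Subgroup (SpecialLinearGroup (Fin 2) R)) (hG : Nat.card G = ℓ) :
    ∃ e : Idem2 R, H u e = G := by
  have : Fact ℓ.Prime := ⟨hℓ⟩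
  have : NeZero ℓ := ⟨hℓ.ne_zero⟩
  have hfin : Finite G := Nat.finite_of_card_ne_zero (hG ▸ hℓ.ne_zero)
  obtain ⟨g, hgG, hg1⟩ : ∃ g ∈ G, g ≠ 1 := by
    by_contra! h
    have : G = ⊥ := (Subgroup.eq_bot_iff_forall _).2 h
    rw [this, Subgroup.card_bot] at hG
    exact hℓ.one_lt.ne hG
  have hgl : g ^ ℓ = 1 := by
    have := pow_card_eq_one' (x := (⟨g, hgG⟩ : G))
    rw [hG] at this
    simpa using congrArg Subtype.val this
  have hglm : toM g ^ ℓ = 1 := by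
    rw [← map_pow, hgl, map_one]
  have huR : IsPrimitiveRoot (u : R) ℓ := hu.map_of_injective (f := Units.coeHom R) Units.val_injective
  -- an eigenvalue
  obtain ⟨k, hk⟩ : ∃ k : ℕ, (toM g - ((u : R) ^ k) • 1).det = 0 := by
    have h1 := Polynomial.X_pow_sub_one_eq_prod hℓ.pos huR
    have h2 := congrArg (Polynomial.aeval (toM g)) h1
    rw [map_sub, map_pow, Polynomial.aeval_X, map_one, hglm, sub_self] at h2
    have h3 : (∏ ζ ∈ Polynomial.nthRootsFinset ℓ (1 : R),
        (Polynomial.aeval (toM g) (Polynomial.X - Polynomial.C ζ)).det) = 0 := by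
      rw [← Matrix.det_zero (R := R) (n := Fin 2), h2]
      exact (map_prod ((Matrix.detMonoidHom (R := R) (n := Fin 2)).comp
        (Polynomial.aeval (R := R) (toM g)).toMonoidHom) _ _).symm
    obtain ⟨ζ, hζ, h4⟩ := Finset.prod_eq_zero_iff.1 h3
    rw [Polynomial.mem_nthRootsFinset hℓ.pos] at hζ
    obtain ⟨k, _, rfl⟩ := huR.eq_pow_of_pow_eq_one hζ
    refine ⟨k, ?_⟩
    rw [← h4]
    rw [map_sub, Polynomial.aeval_X, Polynomial.aeval_C, Algebra.algebraMap_eq_smul_one]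
  rw [Matrix.det_fin_two] at hk
  simp only [Matrix.sub_apply, Matrix.smul_apply, smul_eq_mul, Matrix.one_apply_eq, mul_one] at hk
  have hd := det_toM g
  rw [Matrix.det_fin_two] at hd
  simp only [ne_eq, not_false_eq_true, Matrix.one_apply_ne, mul_zero, sub_zero, zero_ne_one, one_ne_zero] at hk
  set w : Rˣ := u ^ k with hw
  have hwR : (w : R) = (u : R) ^ k := by simp [hw]
  rw [← hwR] at hk
  have hww : (w : R) * ((w⁻¹ : Rˣ) : R) = 1 := w.mul_inv
  have ht : toM g 0 0 + toM g 1 1 = w + ((w⁻¹ : Rˣ) : R) := by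
    linear_combination ((w⁻¹ : Rˣ) : R) * (hd - hk) - (toM g 0 0 + toM g 1 1 - w) * hww
  have hwl : w ^ ℓ = 1 := by rw [hw, ← pow_mul, mul_comm, pow_mul, hu.pow_eq_one, one_pow]
  by_cases hw1 : w = 1
  · exfalso
    rw [hw1] at ht
    simp only [Units.val_one, inv_one] at ht
    have hn : (toM g - 1) * (toM g - 1) = 0 := by
      ext i j
      fin_cases i <;> fin_cases j <;> simp [Matrix.mul_apply, Fin.sum_univ_two]
      · linear_combination toM g 0 0 * ht - hd
      · linear_combination toM g 0 1 * ht
      · linear_combination toM g 1 0 * ht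
      · linear_combination toM g 1 1 * ht - hd
    have hpow : ∀ n : ℕ, toM g ^ n = 1 + (n : R) • (toM g - 1) := by
      intro n
      induction n with
      | zero => simp
      | succ n ih =>
        rw [pow_succ, ih]
        have : toM g = 1 + (toM g - 1) := by abel
        generalize toM g - 1 = N at hn this
        rw [this]
        simp only [Matrix.add_mul, Matrix.mul_add, Matrix.smul_mul, hn, Matrix.one_mul, Matrix.mul_one,
          smul_zero, Nat.cast_succ, add_smul, one_smul]
        abel
    have h := hpow ℓ
    rw [hglm] at h
    have h' : (ℓ : R) • (toM g - 1) = 0 := by simpa using h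
    have h'' : toM g - 1 = 0 := by
      rw [hinv.smul_eq_zero] at h'
      exact h'
    exact hg1 (SL_ext (by rw [map_one]; exact sub_eq_zero.1 h''))
  have hwp : IsPrimitiveRoot w ℓ := by
    rw [IsPrimitiveRoot.iff_orderOf]
    exact orderOf_eq_prime hwl hw1
  have hw2 : IsPrimitiveRoot ((w ^ 2 : Rˣ) : R) ℓ :=
    (hwp.pow_of_coprime 2 (Nat.coprime_two_left.2 hodd)).map_of_injective (f := Units.coeHom R) Units.val_injective
  have hunit : IsUnit (1 - ((w ^ 2 : Rˣ) : R)) := by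
    refine isUnit_of_dvd_unit ?_ hinv
    have h1 := Polynomial.sub_dvd_eval_sub (1 : R) ((w ^ 2 : Rˣ) : R)
      (∑ i ∈ Finset.range ℓ, Polynomial.X ^ i)
    rw [Polynomial.eval_finsetSum, Polynomial.eval_finsetSum] at h1
    simp only [Polynomial.eval_pow, Polynomial.eval_X] at h1
    rw [hw2.geom_sum_eq_zero hℓ.one_lt] at h1
    simpa using h1
  obtain ⟨d, hdu⟩ := hunit
  -- inverse of `w - w⁻¹`
  obtain ⟨c, hc⟩ : ∃ c : R, ((w : R) - ((w⁻¹ : Rˣ) : R)) * c = 1 := by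
    refine ⟨- w * ((d⁻¹ : Rˣ) : R), ?_⟩
    have h1 : (d : R) * ((d⁻¹ : Rˣ) : R) = 1 := d.mul_inv
    have h2 : (d : R) = 1 - (w : R) ^ 2 := by rw [hdu]; simp
    linear_combination h1 - ((d⁻¹ : Rˣ) : R) * h2 + ((d⁻¹ : Rˣ) : R) * hww
  let e : Idem2 R := {
    m := c • (toM g - ((w⁻¹ : Rˣ) : R) • 1)
    tr := by
      simp
      linear_combination c * ht + hc
    dt := by
      simp
      linear_combination c ^ 2 * (hd - ((w⁻¹ : Rˣ) : R) * ht - hww) }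
  have hge : e.D w = g := by
    apply SL_ext
    change (w : R) • e.m + ((w⁻¹ : Rˣ) : R) • (1 - e.m) = _
    ext i j
    simp only [e, Matrix.add_apply, Matrix.smul_apply, Matrix.sub_apply, smul_eq_mul]
    linear_combination (toM g i j - ((w⁻¹ : Rˣ) : R) * (1 : Matrix (Fin 2) (Fin 2) R) i j) * hc
  have hgH : g ∈ H u e := by
    rw [← hge, hw, map_pow]
    exact Subgroup.npow_mem_zpowers _ _
  refine ⟨e, ?_⟩
  have hcard : Nat.card (H u e) = ℓ := by rw [card_H, ← hu.eq_orderOf]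
  have hfin2 : Finite (H u e) := Nat.finite_of_card_ne_zero (hcard ▸ hℓ.ne_zero)
  have hog : Nat.card (Subgroup.zpowers g) = ℓ := by
    rw [Nat.card_zpowers, orderOf_eq_prime hgl hg1]
  have e1 : Subgroup.zpowers g = G :=
    Subgroup.eq_of_le_of_card_ge (by rwa [Subgroup.zpowers_le]) (by rw [hG, hog])
  have e2 : Subgroup.zpowers g = H u e :=
    Subgroup.eq_of_le_of_card_ge (by rwa [Subgroup.zpowers_le]) (by rw [hcard, hog])
  rw [← e1, e2]


local notation "φ" => algebraMap R (FractionRing R)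

/-- The fractional ideal generated by two elements. -/
noncomputable def pr (x y : FractionRing R) : FractionalIdeal R⁰ (FractionRing R) :=
  spanSingleton R⁰ x + spanSingleton R⁰ y

theorem mem_pr {x y z : FractionRing R} : z ∈ pr x y ↔ ∃ r s : R, φ r * x + φ s * y = z := by
  rw [pr, ← FractionalIdeal.mem_coe, coe_add, Submodule.add_eq_sup, Submodule.mem_sup]
  simp only [FractionalIdeal.mem_coe, mem_spanSingleton]
  constructor
  · rintro ⟨_, ⟨r, rfl⟩, _, ⟨s, rfl⟩, h⟩
    exact ⟨r, s, by simpa [Algebra.smul_def] using h⟩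
  · rintro ⟨r, s, h⟩
    exact ⟨_, ⟨r, rfl⟩, _, ⟨s, rfl⟩, by simpa [Algebra.smul_def] using h⟩

theorem left_mem_pr (x y : FractionRing R) : x ∈ pr x y := mem_pr.2 ⟨1, 0, by simp⟩
theorem right_mem_pr (x y : FractionRing R) : y ∈ pr x y := mem_pr.2 ⟨0, 1, by simp⟩

theorem pr_le {x y : FractionRing R} {I : FractionalIdeal R⁰ (FractionRing R)} (hx : x ∈ I) (hy : y ∈ I) :
    pr x y ≤ I := by
  intro z hz
  obtain ⟨r, s, rfl⟩ := mem_pr.1 hz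
  rw [← Algebra.smul_def, ← Algebra.smul_def]
  exact Submodule.add_mem (I : Submodule R (FractionRing R)) (Submodule.smul_mem _ _ hx) (Submodule.smul_mem _ _ hy)

theorem pr_mul_pr {x y a b : FractionRing R} {p q r s : R} (h : a * x + b * y = 1)
    (hp : φ p = a * x) (hq : φ q = a * y) (hr : φ r = b * x) (hs : φ s = b * y) :
    pr x y * pr a b = 1 := by
  apply le_antisymm
  · rw [FractionalIdeal.mul_le]
    intro i hi j hj
    obtain ⟨r1, s1, rfl⟩ := mem_pr.1 hi
    obtain ⟨r2, s2, rfl⟩ := mem_pr.1 hj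
    rw [FractionalIdeal.mem_one_iff]
    refine ⟨r1 * r2 * p + r1 * s2 * r + s1 * r2 * q + s1 * s2 * s, ?_⟩
    simp only [map_add, map_mul, hp, hq, hr, hs]
    ring
  · rw [FractionalIdeal.one_le, ← h]
    refine Submodule.add_mem (_ : Submodule R (FractionRing R)) ?_ ?_
    · rw [mul_comm a x]
      exact mul_mem_mul (left_mem_pr _ _) (left_mem_pr _ _)
    · rw [mul_comm b y]
      exact mul_mem_mul (right_mem_pr _ _) (right_mem_pr _ _)

/-- Factorisation data for an idempotent. -/
structure Rel (e : Idem2 R) (I : (FractionalIdeal R⁰ (FractionRing R))ˣ) (x y a b : FractionRing R) :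
    Prop where
  h : a * x + b * y = 1
  hp : φ (e.m 0 0) = a * x
  hq : φ (e.m 0 1) = a * y
  hr : φ (e.m 1 0) = b * x
  hs : φ (e.m 1 1) = b * y
  hI : (I : FractionalIdeal R⁰ (FractionRing R)) = pr x y

theorem Rel.inv {e : Idem2 R} {I : (FractionalIdeal R⁰ (FractionRing R))ˣ} {x y a b : FractionRing R}
    (H : Rel e I x y a b) : ((I⁻¹ : (FractionalIdeal R⁰ (FractionRing R))ˣ) : FractionalIdeal R⁰ (FractionRing R)) = pr a b := by
  rw [Units.inv_eq_of_mul_eq_one_right]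
  rw [H.hI]
  exact pr_mul_pr H.h H.hp H.hq H.hr H.hs

theorem exists_Rel (e : Idem2 R) : ∃ I x y a b, Rel e I x y a b := by
  have key : ∃ x y a b : FractionRing R, a * x + b * y = 1 ∧ φ (e.m 0 0) = a * x ∧ φ (e.m 0 1) = a * y ∧
      φ (e.m 1 0) = b * x ∧ φ (e.m 1 1) = b * y := by
    have h1 := congrArg φ e.tr
    have h2 := congrArg φ e.dt
    simp only [map_add, map_mul, map_one] at h1 h2
    by_cases h0 : φ (e.m 0 0) = 0
    · rw [h0, zero_add] at h1
      rw [h0, zero_mul] at h2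
      refine ⟨φ (e.m 1 0), 1, φ (e.m 0 1), 1, ?_, ?_, ?_, ?_, ?_⟩
      · rw [← h2]; ring
      · rw [← h2, h0]
      · ring
      · ring
      · rw [h1]; ring
    · refine ⟨φ (e.m 0 0), φ (e.m 0 1), 1, φ (e.m 1 0) / φ (e.m 0 0), ?_, ?_, ?_, ?_, ?_⟩
      · field_simp
        linear_combination φ (e.m 0 0) * h1 - h2
      · ring
      · ring
      · field_simp
      · field_simp
        linear_combination h2
  obtain ⟨x, y, a, b, h, hp, hq, hr, hs⟩ := key
  have := pr_mul_pr h hp hq hr hs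
  exact ⟨⟨pr x y, pr a b, this, by rw [mul_comm, this]⟩, x, y, a, b, h, hp, hq, hr, hs, rfl⟩

theorem spanSingleton_mul_pr (c x y : FractionRing R) : pr x y * spanSingleton R⁰ c = pr (c * x) (c * y) := by
  rw [pr, pr, add_mul, spanSingleton_mul_spanSingleton, spanSingleton_mul_spanSingleton, mul_comm x, mul_comm y]

theorem Rel.scale {e : Idem2 R} {I : (FractionalIdeal R⁰ (FractionRing R))ˣ} {x y a b : FractionRing R}
    (H : Rel e I x y a b) (c : (FractionRing R)ˣ) :
    Rel e (I * toPrincipalIdeal R (FractionRing R) c) (c * x) (c * y) (a / c) (b / c) := by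
  have hc : (c : FractionRing R) ≠ 0 := c.ne_zero
  refine ⟨?_, ?_, ?_, ?_, ?_, ?_⟩
  · rw [← H.h]; field_simp
  · rw [H.hp]; field_simp
  · rw [H.hq]; field_simp
  · rw [H.hr]; field_simp
  · rw [H.hs]; field_simp
  · rw [Units.val_mul, coe_toPrincipalIdeal, H.hI, spanSingleton_mul_pr]

theorem Rel.unique {e : Idem2 R} {I I' : (FractionalIdeal R⁰ (FractionRing R))ˣ} {x y a b x' y' a' b' : FractionRing R}
    (H : Rel e I x y a b) (H' : Rel e I' x' y' a' b') :
    ClassGroup.mk (FractionRing R) I = ClassGroup.mk (FractionRing R) I' := by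
  have p := H.hp.symm.trans H'.hp
  have q := H.hq.symm.trans H'.hq
  have r := H.hr.symm.trans H'.hr
  have s := H.hs.symm.trans H'.hs
  have hx : (x' * a + y' * b) * x = x' := by
    linear_combination x' * H'.h + x' * p + y' * r
  have hy : (x' * a + y' * b) * y = y' := by
    linear_combination y' * H'.h + x' * q + y' * s
  have hc : x' * a + y' * b ≠ 0 := by
    intro h0
    rw [h0, zero_mul] at hx hy
    have := H'.h
    rw [← hx, ← hy] at this
    simp at this
  rw [ClassGroup.mk_eq_mk]
  refine ⟨Units.mk0 _ hc, Units.ext ?_⟩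
  rw [Units.val_mul, coe_toPrincipalIdeal, H.hI, H'.hI, spanSingleton_mul_pr, Units.val_mk0, hx, hy]

theorem Rel.compl {e : Idem2 R} {I : (FractionalIdeal R⁰ (FractionRing R))ˣ} {x y a b : FractionRing R}
    (H : Rel e I x y a b) : Rel e.compl I⁻¹ b (-a) y (-x) := by
  refine ⟨?_, ?_, ?_, ?_, ?_, ?_⟩
  · rw [← H.h]; ring
  · simp [Idem2.compl, H.hp]; linear_combination -H.h
  · simp [Idem2.compl, H.hq]; ring
  · simp [Idem2.compl, H.hr]; ring
  · simp [Idem2.compl, H.hs]; linear_combination -H.h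
  · rw [H.inv]
    apply le_antisymm
    · exact pr_le (mem_pr.2 ⟨0, -1, by simp⟩) (mem_pr.2 ⟨1, 0, by simp⟩)
    · exact pr_le (mem_pr.2 ⟨0, 1, by simp⟩) (mem_pr.2 ⟨-1, 0, by simp⟩)

theorem conj_eq {γ : SpecialLinearGroup (Fin 2) R} {e e' : Idem2 R} (h : toM γ * e.m = e'.m * toM γ) :
    conj γ e = e' := by
  apply Idem2.ext
  change toM γ * e.m * toM γ⁻¹ = e'.m
  rw [h, Matrix.mul_assoc, SL_mul_inv, Matrix.mul_one]

theorem toM_inv (γ : SpecialLinearGroup (Fin 2) R) : toM γ⁻¹ = !![toM γ 1 1, - toM γ 0 1; - toM γ 1 0, toM γ 0 0] :=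
  Matrix.adjugate_fin_two (toM γ)

theorem Rel.conj {e : Idem2 R} {I : (FractionalIdeal R⁰ (FractionRing R))ˣ} {x y a b : FractionRing R}
    (H : Rel e I x y a b) (γ : SpecialLinearGroup (Fin 2) R) :
    Rel (e.conj γ) I (x * φ (toM γ 1 1) - y * φ (toM γ 1 0)) (-x * φ (toM γ 0 1) + y * φ (toM γ 0 0))
      (φ (toM γ 0 0) * a + φ (toM γ 0 1) * b) (φ (toM γ 1 0) * a + φ (toM γ 1 1) * b) := by
  have hd := congrArg φ (det_toM γ)
  rw [Matrix.det_fin_two] at hd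
  simp only [map_sub, map_mul, map_one] at hd
  have hp := H.hp
  have hq := H.hq
  have hr := H.hr
  have hs := H.hs
  refine ⟨?_, ?_, ?_, ?_, ?_, ?_⟩
  · linear_combination (a * x + b * y) * hd + H.h
  · simp [Idem2.conj, Matrix.mul_apply, Fin.sum_univ_two, toM_inv, hp, hq, hr, hs]; ring
  · simp [Idem2.conj, Matrix.mul_apply, Fin.sum_univ_two, toM_inv, hp, hq, hr, hs]; ring
  · simp [Idem2.conj, Matrix.mul_apply, Fin.sum_univ_two, toM_inv, hp, hq, hr, hs]; ring
  · simp [Idem2.conj, Matrix.mul_apply, Fin.sum_univ_two, toM_inv, hp, hq, hr, hs]; ring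
  · rw [H.hI]
    apply le_antisymm
    · refine pr_le (mem_pr.2 ⟨toM γ 0 0, toM γ 1 0, ?_⟩) (mem_pr.2 ⟨toM γ 0 1, toM γ 1 1, ?_⟩)
      · linear_combination x * hd
      · linear_combination y * hd
    · refine pr_le (mem_pr.2 ⟨toM γ 1 1, - toM γ 1 0, ?_⟩) (mem_pr.2 ⟨- toM γ 0 1, toM γ 0 0, ?_⟩)
      · simp; ring
      · simp; ring

theorem Rel.exists_conj {e e' : Idem2 R} {I : (FractionalIdeal R⁰ (FractionRing R))ˣ}
    {x y a b x' y' a' b' : FractionRing R}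
    (H : Rel e I x y a b) (H' : Rel e' I x' y' a' b') : ∃ γ, Idem2.conj γ e = e' := by
  have key : ∀ {i j : FractionRing R}, i ∈ (I : FractionalIdeal R⁰ (FractionRing R)) →
      j ∈ ((I⁻¹ : (FractionalIdeal R⁰ (FractionRing R))ˣ) : FractionalIdeal R⁰ (FractionRing R)) →
      ∃ r : R, φ r = i * j := by
    intro i j hi hj
    have := mul_mem_mul hi hj
    rwa [Units.mul_inv, FractionalIdeal.mem_one_iff] at this
  have hx : x ∈ (I : FractionalIdeal R⁰ (FractionRing R)) := H.hI ▸ left_mem_pr _ _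
  have hy : y ∈ (I : FractionalIdeal R⁰ (FractionRing R)) := H.hI ▸ right_mem_pr _ _
  have hx' : x' ∈ (I : FractionalIdeal R⁰ (FractionRing R)) := H'.hI ▸ left_mem_pr _ _
  have hy' : y' ∈ (I : FractionalIdeal R⁰ (FractionRing R)) := H'.hI ▸ right_mem_pr _ _
  have ha := H.inv ▸ left_mem_pr a b
  have hb := H.inv ▸ right_mem_pr a b
  have ha' := H'.inv ▸ left_mem_pr a' b'
  have hb' := H'.inv ▸ right_mem_pr a' b'
  obtain ⟨r1, h1⟩ := key hx ha'
  obtain ⟨r2, h2⟩ := key hy' hb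
  obtain ⟨r3, h3⟩ := key hy ha'
  obtain ⟨r4, h4⟩ := key hy' ha
  obtain ⟨r5, h5⟩ := key hx hb'
  obtain ⟨r6, h6⟩ := key hx' hb
  obtain ⟨r7, h7⟩ := key hy hb'
  obtain ⟨r8, h8⟩ := key hx' ha
  have inj : Function.Injective φ := IsFractionRing.injective R (FractionRing R)
  have k := H.h
  have k' := H'.h
  let γ : SpecialLinearGroup (Fin 2) R := ⟨!![r1 + r2, r3 - r4; r5 - r6, r7 + r8], by
    rw [Matrix.det_fin_two]
    apply inj
    simp [h1, h2, h3, h4, h5, h6, h7, h8]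
    linear_combination (a' * x' + b' * y') * k + k'⟩
  have hγ : toM γ = !![r1 + r2, r3 - r4; r5 - r6, r7 + r8] := rfl
  refine ⟨γ, conj_eq ?_⟩
  have hp := H.hp
  have hq := H.hq
  have hr := H.hr
  have hs := H.hs
  have hp' := H'.hp
  have hq' := H'.hq
  have hr' := H'.hr
  have hs' := H'.hs
  rw [hγ]
  ext i j
  apply inj
  fin_cases i <;> fin_cases j <;>
    simp [Matrix.mul_apply, Fin.sum_univ_two, h1, h2, h3, h4, h5, h6, h7, h8, hp, hq, hr, hs, hp', hq', hr', hs']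
  · linear_combination a' * x * (k - k')
  · linear_combination a' * y * (k - k')
  · linear_combination b' * x * (k - k')
  · linear_combination b' * y * (k - k')

/-- The ideal class of an idempotent. -/
noncomputable def cl (e : Idem2 R) : ClassGroup R :=
  ClassGroup.mk (FractionRing R) (exists_Rel e).choose

theorem Rel.cl_eq {e : Idem2 R} {I : (FractionalIdeal R⁰ (FractionRing R))ˣ} {x y a b : FractionRing R}
    (H : Rel e I x y a b) : cl e = ClassGroup.mk (FractionRing R) I := by
  obtain ⟨x', y', a', b', H'⟩ := (exists_Rel e).choose_spec
  exact H'.unique H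

theorem cl_compl (e : Idem2 R) : cl e.compl = (cl e)⁻¹ := by
  obtain ⟨I, x, y, a, b, H⟩ := exists_Rel e
  rw [H.cl_eq, H.compl.cl_eq, map_inv]

theorem cl_eq_iff (e e' : Idem2 R) : cl e = cl e' ↔ ∃ γ, Idem2.conj γ e = e' := by
  constructor
  · intro h
    obtain ⟨I, x, y, a, b, H⟩ := exists_Rel e
    obtain ⟨I', x', y', a', b', H'⟩ := exists_Rel e'
    rw [H.cl_eq, H'.cl_eq, ClassGroup.mk_eq_mk] at h
    obtain ⟨c, rfl⟩ := h
    exact (H.scale c).exists_conj H'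
  · rintro ⟨γ, rfl⟩
    obtain ⟨I, x, y, a, b, H⟩ := exists_Rel e
    rw [H.cl_eq, (H.conj γ).cl_eq]

theorem cl_surjective [IsDedekindDomain R] : Function.Surjective (cl : Idem2 R → ClassGroup R) := by
  intro C
  obtain ⟨⟨J, hJ⟩, rfl⟩ := ClassGroup.mk0_surjective C
  have hJ0 : J ≠ ⊥ := mem_nonZeroDivisors_iff_ne_zero.1 hJ
  obtain ⟨x, hxJ, hx0⟩ := Submodule.exists_mem_ne_zero_of_ne_bot hJ0
  obtain ⟨y, hxy⟩ := IsDedekindDomain.exists_eq_span_pair hxJ hx0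
  rw [← ClassGroup.mk_mk0 (FractionRing R)]
  set I := FractionalIdeal.mk0 (FractionRing R) ⟨J, hJ⟩ with hIdef
  have hI : (I : FractionalIdeal R⁰ (FractionRing R)) = pr (φ x) (φ y) := by
    rw [hIdef, coe_mk0]
    change ((J : Ideal R) : FractionalIdeal R⁰ (FractionRing R)) = _
    rw [hxy, Ideal.span_insert, coeIdeal_sup, coeIdeal_span_singleton, coeIdeal_span_singleton, pr]
  have h1 : (1 : FractionRing R) ∈ pr (φ x) (φ y) * ((I⁻¹ : (FractionalIdeal R⁰ (FractionRing R))ˣ) : FractionalIdeal R⁰ (FractionRing R)) := by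
    rw [← hI, Units.mul_inv]
    exact one_mem_one _
  have key : ∀ {i j : FractionRing R}, i ∈ (I : FractionalIdeal R⁰ (FractionRing R)) →
      j ∈ ((I⁻¹ : (FractionalIdeal R⁰ (FractionRing R))ˣ) : FractionalIdeal R⁰ (FractionRing R)) →
      ∃ r : R, φ r = i * j := by
    intro i j hi hj
    have := mul_mem_mul hi hj
    rwa [Units.mul_inv, FractionalIdeal.mem_one_iff] at this
  rw [pr, add_mul, ← FractionalIdeal.mem_coe, coe_add, Submodule.add_eq_sup, Submodule.mem_sup] at h1
  simp only [FractionalIdeal.mem_coe, mem_singleton_mul] at h1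
  obtain ⟨_, ⟨a, ha, rfl⟩, _, ⟨b, hb, rfl⟩, h⟩ := h1
  have hx : φ x ∈ (I : FractionalIdeal R⁰ (FractionRing R)) := hI ▸ left_mem_pr _ _
  have hy : φ y ∈ (I : FractionalIdeal R⁰ (FractionRing R)) := hI ▸ right_mem_pr _ _
  obtain ⟨p, hp⟩ := key hx ha
  obtain ⟨q, hq⟩ := key hy ha
  obtain ⟨r, hr⟩ := key hx hb
  obtain ⟨s, hs⟩ := key hy hb
  have inj : Function.Injective φ := IsFractionRing.injective R (FractionRing R)
  let e : Idem2 R := {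
    m := !![p, q; r, s]
    tr := by
      apply inj
      simp [hp, hs, h]
    dt := by
      apply inj
      simp [hp, hq, hr, hs]
      ring }
  have H : Rel e I (φ x) (φ y) a b := ⟨by linear_combination h, by simp [e, hp, mul_comm],
    by simp [e, hq, mul_comm], by simp [e, hr, mul_comm], by simp [e, hs, mul_comm], hI⟩
  exact ⟨e, H.cl_eq⟩

theorem main_core [IsDedekindDomain R] (ℓ : ℕ) (hℓ : ℓ.Prime) (hodd : Odd ℓ) (hinv : IsUnit (ℓ : R)) (u : Rˣ)
    (hu : IsPrimitiveRoot u ℓ) :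
    Nat.card {c : Quotient (MulAction.orbitRel
        (ConjAct (Matrix.SpecialLinearGroup (Fin 2) R))
        (Subgroup (Matrix.SpecialLinearGroup (Fin 2) R))) //
      ∃ H, c = Quotient.mk _ H ∧ Nat.card H = ℓ} =
    Nat.card (Quotient (invSetoid (ClassGroup R))) := by
  have huu : u ≠ u⁻¹ := by
    intro h
    have h2 : u ^ 2 = 1 := by
      rw [sq]; nth_rewrite 2 [h]; exact mul_inv_cancel u
    have h3 := (hu.pow_eq_one_iff_dvd 2).1 h2
    have h4 := (Nat.prime_dvd_prime_iff_eq hℓ Nat.prime_two).1 h3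
    rw [h4] at hodd
    exact absurd hodd (by decide)
  let Φ : Idem2 R → {c : Quotient (MulAction.orbitRel
        (ConjAct (Matrix.SpecialLinearGroup (Fin 2) R))
        (Subgroup (Matrix.SpecialLinearGroup (Fin 2) R))) //
      ∃ H, c = Quotient.mk _ H ∧ Nat.card H = ℓ} :=
    fun e => ⟨Quotient.mk _ (H u e), H u e, rfl, by rw [card_H, hu.eq_orderOf]⟩
  let Ψ : Idem2 R → Quotient (invSetoid (ClassGroup R)) := fun e => Quotient.mk _ (cl e)
  have hΦ : Function.Surjective Φ := by
    rintro ⟨_, G, rfl, hG⟩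
    obtain ⟨e, he⟩ := exists_H ℓ hℓ hodd hinv u hu G hG
    exact ⟨e, Subtype.ext (by simp only [Φ, he])⟩
  have hΨ : Function.Surjective Ψ := by
    intro c
    obtain ⟨c, rfl⟩ := Quotient.exists_rep c
    obtain ⟨e, rfl⟩ := cl_surjective c
    exact ⟨e, rfl⟩
  have hker : Setoid.ker Φ = Setoid.ker Ψ := by
    ext e e'
    rw [Setoid.ker_def, Setoid.ker_def]
    have h1 : Φ e = Φ e' ↔ ∃ γ, Idem2.conj γ e' = e ∨ Idem2.conj γ e' = e.compl := by
      rw [Subtype.ext_iff]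
      simp only [Φ]
      rw [Quotient.eq, MulAction.orbitRel_apply, MulAction.mem_orbit_iff]
      constructor
      · rintro ⟨g, hg⟩
        refine ⟨ConjAct.ofConjAct g, ?_⟩
        rw [← H_eq_iff u huu, H_conj]
        exact hg
      · rintro ⟨γ, hγ⟩
        rw [← H_eq_iff u huu, H_conj] at hγ
        exact ⟨_, hγ⟩
    have h2 : Ψ e = Ψ e' ↔ cl e' = cl e ∨ cl e' = (cl e)⁻¹ := by
      simp only [Ψ]
      rw [Quotient.eq]
      rfl
    rw [h1, h2, exists_or, ← cl_compl, cl_eq_iff, cl_eq_iff]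
  have e1 := Setoid.quotientKerEquivOfSurjective Φ hΦ
  have e2 := Setoid.quotientKerEquivOfSurjective Ψ hΨ
  rw [← Nat.card_congr e1, ← Nat.card_congr e2, hker]

end Idem2
end Core

/-- Let `ℓ` be an odd prime, `K` a number field containing a primitive
`ℓ`-th root of unity, and `S` a finite set of finite places of `K` such that `ℓ` is invertible
in `O = O_{K,S}`.  Then the number of conjugacy classes of subgroups of order `ℓ` in `SL₂(O)`
equals the number of orbits of the ideal class group `Cl(O)` under the inversion involution
`c ↦ c⁻¹`. -/
theorem card_conjClasses_subgroups_order_ell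
    (ℓ : ℕ) (hℓ : ℓ.Prime) (hℓodd : Odd ℓ)
    (K : Type*) [Field K] [NumberField K]
    (ζ : K) (hζ : IsPrimitiveRoot ζ ℓ)
    (S : Set (HeightOneSpectrum (𝓞 K))) (hS : S.Finite)
    (hℓinv : IsUnit (ℓ : S.integer K)) :
    Nat.card {c : Quotient (MulAction.orbitRel
        (ConjAct (Matrix.SpecialLinearGroup (Fin 2) (S.integer K)))
        (Subgroup (Matrix.SpecialLinearGroup (Fin 2) (S.integer K)))) //
      ∃ H, c = Quotient.mk _ H ∧ Nat.card H = ℓ} =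
    Nat.card (Quotient (invSetoid (ClassGroup (S.integer K)))) := by
  
  have := sInteger_isDedekindDomain S hS
  have hzInt : IsIntegral ℤ ζ := hζ.isIntegral hℓ.pos
  let z : S.integer K := algebraMap (𝓞 K) (S.integer K) ⟨ζ, hzInt⟩
  have hz : IsPrimitiveRoot z ℓ :=
    IsPrimitiveRoot.of_map_of_injective (f := (S.integer K).val) (by exact hζ) Subtype.val_injective
  have hzu : IsUnit z := hz.isUnit hℓ.ne_zero
  obtain ⟨u, hu⟩ := hzu
  have hup : IsPrimitiveRoot u ℓ :=
    IsPrimitiveRoot.of_map_of_injective (f := Units.coeHom (S.integer K)) (by rw [← hu] at hz; exact hz) Units.val_injective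
  exact Idem2.main_core ℓ hℓ hℓodd hℓinv u hup
end
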